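/- arXiv:2103.12684 — 2 statements merged into one kernel-verified Lean document; each statement's English description precedes it below -/
import Mathlib

section
/- Let q ≥ 17 be a prime number. For i = 1, …, q−1 define S_i : ℝ → ℝ by S_i(x) = ((q−1)/q)·x + i. Then the unique probability measure μ on ℝ satisfying μ = (1/(q−1)) ∑_{i=1}^{q−1} μ ∘ S_i^{−1} is absolutely continuous with respect to Lebesgue measure. -/
open MeasureTheory

/-!
Let `R u` be the operator of averaging against the exponential law of mean `exp u`, and let
`M` be that of averaging against `μ`. The `R u` are resolvents of the translation semigroup, hence
commute and solve the logistic equation `R' = -R (1 - R)`. If `R u * M` is Cauchy in operator norm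
along a sequence `u → -∞`, then `μ` is a limit in total variation of the absolutely continuous
measures `expLaw u ∗ μ`, so it suffices that `T u * M` is integrable at `-∞` for `T = R (1 - R)`.

Entropy controls `T` on partial sums. Since `q - 1` and `q` are coprime, the first `J` digits form a
subset of a lattice of mesh about `q ^ (-J)`, so after smoothing at scale `exp u ≥ q ^ (-J)` their
law has density `O (exp (J ℓ))`, where `ℓ = log (q / (q - 1))`. Its entropy, which is nondecreasing
in `u`, varies by at most `J ℓ + O (1)` for `u ≤ 0`, and by a Pinsker-type strict concavity estimate
the squares of the norms of `T` on that partial sum, over steps of length `ℓ`, have sum at most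
`2 J ℓ / (1 - exp (-ℓ)) + O (1)`. Self-similarity splits `μ` into `n` rescaled blocks of `J`
digits, so the arithmetic-geometric mean inequality bounds `‖T u ^ n * M‖` by a small constant times
the corresponding norm at some `u' ≤ u / κ`; iterating gives a bound `θ ^ B` for
`‖T u ^ (n B) * M‖` when `|u|` is of order at least `κ ^ B`.

The logistic equation then lowers the power: `(eᵘ R)' = eᵘ R²` and the analogous identity for
`1 - R` show that removing one factor `T` costs only a factor about `4`. Thus `‖T u * M‖` is of
order at most `B ^ 2 (4 ^ n θ) ^ B` at distance `κ ^ B`, which is integrable once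
`κ 4 ^ n θ < 1`.
-/

section Logistic

open Filter Topology

variable {A : Type*} [NormedCommRing A]

theorem norm_pow_mul_one_sub_pow_mul_le [NormOneClass A] {r : A} (hr : ‖r‖ ≤ 1) (m : A) (a b : ℕ) :
    ‖r ^ a * (1 - r) ^ b * m‖ ≤ 2 ^ b * ‖m‖ := by
  have h2 : ‖1 - r‖ ≤ 2 := by
    calc ‖1 - r‖ ≤ ‖(1 : A)‖ + ‖r‖ := norm_sub_le _ _
      _ ≤ 2 := by rw [norm_one]; linarith
  calc ‖r ^ a * (1 - r) ^ b * m‖ ≤ ‖r‖ ^ a * ‖1 - r‖ ^ b * ‖m‖ := by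
        refine (norm_mul_le _ _).trans ?_
        gcongr
        refine (norm_mul_le _ _).trans ?_
        gcongr <;> exact norm_pow_le _ _
    _ ≤ 1 * 2 ^ b * ‖m‖ := by
        gcongr
        exact pow_le_one₀ (norm_nonneg _) hr
    _ = 2 ^ b * ‖m‖ := by rw [one_mul]

variable [NormedAlgebra ℝ A]

/-- Solutions of the logistic equation `ρ' = -ρ (1 - ρ)` in a commutative normed algebra. Resolvents
of a semigroup, parametrised by the logarithm of their mean, are of this kind. -/
def IsLogistic (ρ : ℝ → A) : Prop :=
  ∀ u, HasDerivAt ρ (-(ρ u * (1 - ρ u))) u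

namespace IsLogistic

variable {ρ : ℝ → A}

theorem reflect (hρ : IsLogistic ρ) : IsLogistic fun u => 1 - ρ (-u) := fun u =>
  (((hρ (-u)).scomp u (hasDerivAt_neg u)).const_sub 1).congr_deriv <| by
    simp only [smul_neg, neg_smul, one_smul, neg_neg]; ring

theorem hasDerivAt_pow (hρ : IsLogistic ρ) (a : ℕ) (u : ℝ) :
    HasDerivAt (fun x => ρ x ^ a) (-(a * (ρ u ^ a * (1 - ρ u)))) u := by
  refine ((hρ u).fun_pow a).congr_deriv ?_
  cases a with
  | zero => simp
  | succ a => rw [Nat.add_sub_cancel, pow_succ]; ring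

theorem hasDerivAt_one_sub_pow (hρ : IsLogistic ρ) (b : ℕ) (u : ℝ) :
    HasDerivAt (fun x => (1 - ρ x) ^ b) (b * ((1 - ρ u) ^ b * ρ u)) u := by
  refine (((hρ u).const_sub 1).fun_pow b).congr_deriv ?_
  cases b with
  | zero => simp
  | succ b => rw [Nat.add_sub_cancel, pow_succ]; ring

/-- Along a logistic curve `(eᵘ ρ)' = eᵘ ρ²`: the weight raises the power of `ρ` by one without
creating a power of `1 - ρ`. -/
theorem hasDerivAt_exp_smul (hρ : IsLogistic ρ) (m : A) (a b : ℕ) (v u : ℝ) :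
    HasDerivAt (fun x => Real.exp (a * (x - v)) • (ρ x ^ a * (1 - ρ x) ^ b * m))
      (((a + b : ℝ) * Real.exp (a * (u - v))) • (ρ u ^ (a + 1) * (1 - ρ u) ^ b * m)) u := by
  have hexp : HasDerivAt (fun x : ℝ => Real.exp (a * (x - v))) (Real.exp (a * (u - v)) * a) u := by
    simpa using (((hasDerivAt_id u).sub_const v).const_mul (a : ℝ)).exp
  refine (hexp.fun_smul (((hρ.hasDerivAt_pow a u).fun_mul
    (hρ.hasDerivAt_one_sub_pow b u)).mul_const m)).congr_deriv ?_
  simp only [Algebra.smul_def, map_mul, map_add, map_natCast]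
  ring

theorem norm_pow_mul_pow_le_of_window (hρ : IsLogistic ρ) (m : A) {a : ℕ} (ha : 1 ≤ a) (b : ℕ)
    {v W S C : ℝ} (hW : 0 ≤ W) (hC : ‖ρ (v - W) ^ a * (1 - ρ (v - W)) ^ b * m‖ ≤ C)
    (hS : ∀ u, v - W ≤ u → u ≤ v → ‖ρ u ^ (a + 1) * (1 - ρ u) ^ b * m‖ ≤ S) :
    ‖ρ v ^ a * (1 - ρ v) ^ b * m‖ ≤ (a + b) / a * S + Real.exp (-(a * W)) * C := by
  have : (0 : ℝ) < a := by exact_mod_cast ha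
  have hS0 : 0 ≤ S := (norm_nonneg _).trans (hS v (by linarith) le_rfl)
  have hbound (u : ℝ) : HasDerivAt
      (fun x => (a + b) / a * S * Real.exp (a * (x - v)) + Real.exp (-(a * W)) * C)
      ((a + b) * Real.exp (a * (u - v)) * S) u := by
    have hexp := (((hasDerivAt_id u).sub_const v).const_mul (a : ℝ)).exp
    refine ((hexp.const_mul ((a + b) / a * S)).add_const _).congr_deriv ?_
    simp only [id_eq]
    field_simp
  have key := image_norm_le_of_norm_deriv_right_le_deriv_boundary (a := v - W) (b := v) (x := v)
    (fun u _ => (hρ.hasDerivAt_exp_smul m a b v u).continuousAt.continuousWithinAt)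
    (fun u _ => (hρ.hasDerivAt_exp_smul m a b v u).hasDerivWithinAt) ?_ hbound ?_
    ⟨by linarith, le_rfl⟩
  · simpa using key
  · rw [norm_smul, Real.norm_eq_abs, Real.abs_exp, show (a : ℝ) * (v - W - v) = -(a * W) by ring]
    have : 0 ≤ (a + b) / a * S * Real.exp (-(a * W)) := by positivity
    have := mul_le_mul_of_nonneg_left hC (Real.exp_pos (-(a * W))).le
    linarith
  · intro u hu
    rw [norm_smul, Real.norm_eq_abs, abs_of_nonneg (by positivity)]
    gcongr
    exact hS u hu.1 hu.2.le

theorem norm_sub_mul_le (hρ : IsLogistic ρ) (m : A) {s t D : ℝ} (hst : s ≤ t)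
    (h : ∀ u ≤ t, ‖ρ u * (1 - ρ u) * m‖ ≤ D) : ‖ρ t * m - ρ s * m‖ ≤ D * (t - s) := by
  refine norm_image_sub_le_of_norm_deriv_le_segment' (f := fun u => ρ u * m)
    (fun u _ => ((hρ u).mul_const m).hasDerivWithinAt) (fun u hu => ?_) t ⟨hst, le_rfl⟩
  rw [neg_mul, norm_neg]
  exact h u hu.2.le

variable [NormOneClass A]

/-- Applied to the curve and then to its reflection, the previous estimate removes one factor
`ρ (1 - ρ)` at the cost of a factor about `4`. -/
theorem norm_balanced_le_of_succ (hρ : IsLogistic ρ) (hρ1 : ∀ u, ‖ρ u‖ ≤ 1) (m : A)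
    {k : ℕ} (hk : 1 ≤ k) {v W S : ℝ} (hW : 0 ≤ W) (hW2 : 2 * Real.exp (-W) ≤ 1)
    (hS : ∀ u, |u - v| ≤ W → ‖ρ u ^ (k + 1) * (1 - ρ u) ^ (k + 1) * m‖ ≤ S) :
    ‖ρ v ^ k * (1 - ρ v) ^ k * m‖ ≤ (4 + 2 / k) * S + 6 * Real.exp (-W) * ‖m‖ := by
  have : (0 : ℝ) < k := by exact_mod_cast hk
  have hexp : Real.exp (-(k * W)) * (2 ^ k * ‖m‖) ≤ 2 * Real.exp (-W) * ‖m‖ := by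
    calc Real.exp (-(k * W)) * (2 ^ k * ‖m‖) = (2 * Real.exp (-W)) ^ k * ‖m‖ := by
          rw [mul_pow, ← Real.exp_nat_mul]; ring_nf
      _ ≤ 2 * Real.exp (-W) * ‖m‖ := by
          gcongr
          exact pow_le_of_le_one (by positivity) hW2 (by omega)
  have hreflected (u : ℝ) (hu : v - W ≤ u) (hu' : u ≤ v) :
      ‖ρ u ^ (k + 1) * (1 - ρ u) ^ k * m‖ ≤ (2 + 1 / k) * S + 2 * Real.exp (-W) * ‖m‖ := by
    have hstep := hρ.reflect.norm_pow_mul_pow_le_of_window m hk (k + 1) (v := -u) (S := S)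
      (C := 2 ^ k * ‖m‖) hW ?_ fun x hx hx' => ?_
    · have hratio : ((k + (k + 1 : ℕ) : ℝ) / k) = 2 + 1 / k := by
        push_cast; field_simp; ring
      rw [hratio, neg_neg, sub_sub_cancel, mul_comm ((1 - ρ u) ^ k)] at hstep
      linarith
    · rw [sub_sub_cancel, mul_comm ((1 - _) ^ k)]
      exact norm_pow_mul_one_sub_pow_mul_le (hρ1 _) m (k + 1) k
    · rw [sub_sub_cancel, mul_comm ((1 - _) ^ (k + 1))]
      exact hS (-x) (abs_le.2 ⟨by linarith, by linarith⟩)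
  have hstep := hρ.norm_pow_mul_pow_le_of_window m hk k hW
    (norm_pow_mul_one_sub_pow_mul_le (hρ1 _) m k k) hreflected
  have hratio : ((k + k : ℝ) / k) = 2 := by field_simp; ring
  rw [hratio] at hstep
  have hsum : 2 * ((2 + 1 / k) * S + 2 * Real.exp (-W) * ‖m‖) + 2 * Real.exp (-W) * ‖m‖ =
      (4 + 2 / k) * S + 6 * Real.exp (-W) * ‖m‖ := by ring
  linarith

theorem norm_mul_one_sub_mul_le (hρ : IsLogistic ρ) (hρ1 : ∀ u, ‖ρ u‖ ≤ 1) (m : A) {W : ℝ}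
    (hW : 0 ≤ W) (hW2 : 2 * Real.exp (-W) ≤ 1) {k : ℕ} (hk : 1 ≤ k) {v S : ℝ}
    (hS : ∀ u, |u - v| ≤ k * W → ‖ρ u ^ k * (1 - ρ u) ^ k * m‖ ≤ S) :
    ‖ρ v * (1 - ρ v) * m‖ ≤ k * 4 ^ k * (S + 6 * k * Real.exp (-W) * ‖m‖) := by
  set ε := Real.exp (-W) * ‖m‖ with hε
  have hε0 : 0 ≤ ε := by positivity
  have hS0 : 0 ≤ S := (norm_nonneg _).trans (hS v (by simpa using by positivity))
  rw [mul_assoc _ (Real.exp _), ← hε]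
  induction k, hk using Nat.le_induction generalizing S with
  | base =>
    have := hS v (by simpa using hW)
    simp only [pow_one] at this
    push_cast
    linarith
  | succ k hk ih =>
    have hk0 : (1 : ℝ) ≤ k := by exact_mod_cast hk
    have hprev (u : ℝ) (hu : |u - v| ≤ k * W) :
        ‖ρ u ^ k * (1 - ρ u) ^ k * m‖ ≤ (4 + 2 / k) * S + 6 * ε := by
      rw [hε, ← mul_assoc]
      refine hρ.norm_balanced_le_of_succ hρ1 m hk hW hW2 fun x hx => hS x ?_
      have := abs_sub_le x u v
      push_cast
      linarith
    calc ‖ρ v * (1 - ρ v) * m‖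
        ≤ k * 4 ^ k * ((4 + 2 / k) * S + 6 * ε + 6 * k * ε) := ih hprev (by positivity)
      _ = 4 ^ k * ((4 * k + 2) * S + k * (6 * (k + 1) * ε)) := by field_simp; ring
      _ ≤ 4 ^ k * ((4 * k + 4) * S + (4 * k + 4) * (6 * (k + 1) * ε)) := by gcongr <;> linarith
      _ = ((k + 1 : ℕ) : ℝ) * 4 ^ (k + 1) * (S + 6 * (k + 1 : ℕ) * ε) := by push_cast; ring

/-- The window of half-width `-N log θ * B ^ 2` makes the boundary term as small as `θ ^ B`. -/
theorem norm_mul_one_sub_mul_le_of_decay (hρ : IsLogistic ρ) (hρ1 : ∀ u, ‖ρ u‖ ≤ 1) (m : A)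
    {N : ℕ} (hN : 1 ≤ N) {θ : ℝ} (hθ : 0 < θ) (hθ2 : 2 * θ ≤ 1) {B : ℕ} (hB : 1 ≤ B) {v : ℝ}
    (h : ∀ u ≤ v + N * -Real.log θ * B ^ 2, ‖(ρ u * (1 - ρ u)) ^ (N * B) * m‖ ≤ θ ^ B) :
    ‖ρ v * (1 - ρ v) * m‖ ≤ N * (1 + 6 * N * ‖m‖) * (B ^ 2 * (4 ^ N * θ) ^ B) := by
  have hB' : (1 : ℝ) ≤ B := by exact_mod_cast hB
  have hlog : 0 ≤ -Real.log θ := neg_nonneg.2 (Real.log_nonpos hθ.le (by linarith))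
  have hexp : Real.exp (-(B * -Real.log θ)) = θ ^ B := by
    rw [mul_neg, neg_neg, Real.exp_nat_mul, Real.exp_log hθ]
  have hsmall : 2 * Real.exp (-(B * -Real.log θ)) ≤ 1 := by
    rw [hexp]
    linarith [pow_le_of_le_one hθ.le (by linarith) (Nat.one_le_iff_ne_zero.1 hB)]
  have hchain := hρ.norm_mul_one_sub_mul_le hρ1 m (W := B * -Real.log θ) (by positivity) hsmall
    (k := N * B) (Nat.mul_pos hN hB) (v := v) (S := θ ^ B) fun u hu => by
      rw [← mul_pow]
      refine h u ?_
      push_cast at hu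
      linarith [(abs_le.1 hu).2]
  rw [hexp] at hchain
  calc ‖ρ v * (1 - ρ v) * m‖
      ≤ (N * B : ℕ) * 4 ^ (N * B) * (θ ^ B + 6 * (N * B : ℕ) * θ ^ B * ‖m‖) := hchain
    _ = N * (B + 6 * N * ‖m‖ * B ^ 2) * (4 ^ N * θ) ^ B := by
        rw [pow_mul, mul_pow]; push_cast; ring
    _ ≤ N * (B ^ 2 + 6 * N * ‖m‖ * B ^ 2) * (4 ^ N * θ) ^ B := by gcongr; nlinarith
    _ = _ := by ring

theorem exists_norm_mul_one_sub_mul_le (hρ : IsLogistic ρ) (hρ1 : ∀ u, ‖ρ u‖ ≤ 1) (m : A)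
    {N : ℕ} (hN : 1 ≤ N) {κ θ : ℝ} (hκ : 1 < κ) (hθ : 0 < θ) (hθ2 : 2 * θ ≤ 1) (n₀ : ℝ)
    (h : ∀ (B : ℕ) (u : ℝ), u ≤ -(n₀ * κ ^ B) → ‖(ρ u * (1 - ρ u)) ^ (N * B) * m‖ ≤ θ ^ B) :
    ∃ n₁ > 0, ∀ B : ℕ, 1 ≤ B → ∀ v ≤ -(n₁ * κ ^ B),
      ‖ρ v * (1 - ρ v) * m‖ ≤ N * (1 + 6 * N * ‖m‖) * (B ^ 2 * (4 ^ N * θ) ^ B) := by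
  obtain ⟨K, hK⟩ := (tendsto_pow_const_div_const_pow_of_one_lt 2 hκ).bddAbove_range
  have hlog : 0 ≤ -Real.log θ := neg_nonneg.2 (Real.log_nonpos hθ.le (by linarith))
  have hwindow (B : ℕ) : N * -Real.log θ * B ^ 2 ≤ N * -Real.log θ * K * κ ^ B := by
    have hBK : (B : ℝ) ^ 2 ≤ K * κ ^ B := (div_le_iff₀ (by positivity)).1 (hK ⟨B, rfl⟩)
    rw [mul_assoc _ K]
    exact mul_le_mul_of_nonneg_left hBK (by positivity)
  refine ⟨max 1 (n₀ + N * -Real.log θ * K), lt_max_of_lt_left one_pos, fun B hB v hv =>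
    hρ.norm_mul_one_sub_mul_le_of_decay hρ1 m hN hθ hθ2 hB fun u hu => h B u ?_⟩
  have := mul_le_mul_of_nonneg_right (le_max_right 1 (n₀ + N * -Real.log θ * K))
    (pow_nonneg (one_pos.trans hκ).le B)
  linarith [hwindow B]

/-- If `(ρ (1 - ρ)) ^ (N B) m` decays like `θ ^ B` beyond `-n₀ κ ^ B` then `ρ' m` decays like
`(4 ^ N θ) ^ B` there, which is summable against the distances `κ ^ B`. -/
theorem exists_cauchySeq_of_decay (hρ : IsLogistic ρ) (hρ1 : ∀ u, ‖ρ u‖ ≤ 1) (m : A) {N : ℕ}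
    (hN : 1 ≤ N) {κ θ : ℝ} (hκ : 1 < κ) (hθ : 0 < θ) (hκθ : κ * (4 ^ N * θ) < 1) (n₀ : ℝ)
    (h : ∀ (B : ℕ) (u : ℝ), u ≤ -(n₀ * κ ^ B) → ‖(ρ u * (1 - ρ u)) ^ (N * B) * m‖ ≤ θ ^ B) :
    ∃ x : ℕ → ℝ, Tendsto x atTop atBot ∧ CauchySeq fun n => ρ (x n) * m := by
  have hθ2 : 2 * θ ≤ 1 := by
    have h4 : (4 : ℝ) ^ 1 ≤ 4 ^ N := pow_le_pow_right₀ (by norm_num) hN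
    nlinarith [mul_le_mul_of_nonneg_right h4 hθ.le,
      mul_le_mul_of_nonneg_right hκ.le (show 0 ≤ 4 ^ N * θ by positivity)]
  obtain ⟨n₁, hn₁, hderiv⟩ := hρ.exists_norm_mul_one_sub_mul_le hρ1 m hN hκ hθ hθ2 n₀ h
  set C := N * (1 + 6 * N * ‖m‖)
  refine ⟨fun n => -(n₁ * κ ^ (n + 1)), ?_, ?_⟩
  · exact tendsto_neg_atTop_atBot.comp (Tendsto.const_mul_atTop hn₁
      ((tendsto_pow_atTop_atTop_of_one_lt hκ).comp (tendsto_add_atTop_nat 1)))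
  refine cauchySeq_of_dist_le_of_summable
    (fun n : ℕ => C * n₁ * κ * (((n + 1 : ℕ) : ℝ) ^ 2 * (κ * (4 ^ N * θ)) ^ (n + 1)))
    (fun n => ?_) ?_
  · have hle : -(n₁ * κ ^ (n + 1 + 1)) ≤ -(n₁ * κ ^ (n + 1)) := by
      gcongr
      · exact hκ.le
      · omega
    rw [dist_eq_norm]
    calc ‖ρ (-(n₁ * κ ^ (n + 1))) * m - ρ (-(n₁ * κ ^ (n + 1 + 1))) * m‖
        ≤ C * (((n + 1 : ℕ) : ℝ) ^ 2 * (4 ^ N * θ) ^ (n + 1)) *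
            (-(n₁ * κ ^ (n + 1)) - -(n₁ * κ ^ (n + 1 + 1))) :=
          hρ.norm_sub_mul_le m hle (hderiv (n + 1) (by omega))
      _ ≤ C * (((n + 1 : ℕ) : ℝ) ^ 2 * (4 ^ N * θ) ^ (n + 1)) * (n₁ * κ ^ (n + 1 + 1)) := by
          gcongr
          have : 0 < n₁ * κ ^ (n + 1) := by positivity
          linarith
      _ = _ := by rw [mul_pow κ, pow_succ κ (n + 1)]; ring
  · have := summable_pow_mul_geometric_of_norm_lt_one 2
      (r := κ * (4 ^ N * θ)) (by rwa [Real.norm_of_nonneg (by positivity)])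
    exact ((summable_nat_add_iff 1).2 this).mul_left _

end IsLogistic

end Logistic

section Averaging

open Filter
open scoped BoundedContinuousFunction NNReal

variable {E : Type*} [TopologicalSpace E]

variable (E) in
/-- Bounded operators on the bounded continuous functions. This is a definition, not an
abbreviation, so that its ring structure is always the one underlying its normed ring structure. -/
def BCFOperator : Type _ := (E →ᵇ ℝ) →L[ℝ] (E →ᵇ ℝ)

namespace BCFOperator

noncomputable instance : NormedRing (BCFOperator E) :=
  inferInstanceAs (NormedRing ((E →ᵇ ℝ) →L[ℝ] (E →ᵇ ℝ)))

noncomputable instance : NormedAlgebra ℝ (BCFOperator E) :=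
  inferInstanceAs (NormedAlgebra ℝ ((E →ᵇ ℝ) →L[ℝ] (E →ᵇ ℝ)))

instance : FunLike (BCFOperator E) (E →ᵇ ℝ) (E →ᵇ ℝ) :=
  inferInstanceAs (FunLike ((E →ᵇ ℝ) →L[ℝ] (E →ᵇ ℝ)) _ _)

theorem ext_apply {X Y : BCFOperator E} (h : ∀ f x, X f x = Y f x) : X = Y :=
  DFunLike.ext _ _ fun f => BoundedContinuousFunction.ext (h f)

theorem norm_apply_le (X : BCFOperator E) (f : E →ᵇ ℝ) (x : E) : ‖X f x‖ ≤ ‖X‖ * ‖f‖ :=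
  ((X f).norm_coe_le_norm x).trans (ContinuousLinearMap.le_opNorm (E := E →ᵇ ℝ) _ f)

theorem norm_le_of_forall_apply {X : BCFOperator E} {C : ℝ} (hC : 0 ≤ C)
    (h : ∀ f x, ‖X f x‖ ≤ C * ‖f‖) : ‖X‖ ≤ C :=
  ContinuousLinearMap.opNorm_le_bound (E := E →ᵇ ℝ) _ hC fun f =>
    (BoundedContinuousFunction.norm_le (by positivity)).2 (h f)

end BCFOperator

theorem norm_integral_comp_const_add_le [Add E] [MeasurableSpace E] (m : Measure E)
    [IsFiniteMeasure m] (f : E →ᵇ ℝ) (x : E) :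
    ‖∫ y, f (x + y) ∂m‖ ≤ m.real Set.univ * ‖f‖ := by
  rw [mul_comm]
  exact norm_integral_le_of_norm_le_const (Eventually.of_forall fun y => f.norm_coe_le_norm _)

variable [AddCommMonoid E] [ContinuousAdd E] [MeasurableSpace E] [OpensMeasurableSpace E]

theorem integrable_comp_const_add (m : Measure E) [IsFiniteMeasure m] (f : E →ᵇ ℝ) (x : E) :
    Integrable (fun y => f (x + y)) m :=
  (f.compContinuous ⟨fun y => x + y, by fun_prop⟩).integrable m

variable [FirstCountableTopology E]

/-- The averaging operator `f ↦ (x ↦ ∫ f (x + y) dm(y))`. -/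
noncomputable def averagingOp (m : Measure E) [IsFiniteMeasure m] : BCFOperator E :=
  LinearMap.mkContinuous
    { toFun := fun f => BoundedContinuousFunction.ofNormedAddCommGroup
        (fun x => ∫ y, f (x + y) ∂m)
        (continuous_of_dominated (bound := fun _ => ‖f‖)
          (fun x => (integrable_comp_const_add m f x).aestronglyMeasurable)
          (fun x => Eventually.of_forall fun y => f.norm_coe_le_norm _)
          (integrable_const _)
          (Eventually.of_forall fun y => f.continuous.comp (by fun_prop)))
        (m.real Set.univ * ‖f‖) (norm_integral_comp_const_add_le m f)
      map_add' := fun f g => BoundedContinuousFunction.ext fun x =>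
        integral_add (integrable_comp_const_add m f x) (integrable_comp_const_add m g x)
      map_smul' := fun c f => BoundedContinuousFunction.ext fun x => integral_const_mul c _ }
    (m.real Set.univ) fun f =>
      (BoundedContinuousFunction.norm_le (by positivity)).2 (norm_integral_comp_const_add_le m f)

theorem averagingOp_add (m n : Measure E) [IsFiniteMeasure m] [IsFiniteMeasure n] :
    averagingOp (m + n) = averagingOp m + averagingOp n :=
  BCFOperator.ext_apply fun f x =>
    integral_add_measure (integrable_comp_const_add m f x) (integrable_comp_const_add n f x)

theorem averagingOp_smul (c : ℝ≥0) (m : Measure E) [IsFiniteMeasure m] :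
    averagingOp (c • m) = (c : ℝ) • averagingOp m :=
  BCFOperator.ext_apply fun _ _ => integral_smul_nnreal_measure _ c

theorem averagingOp_conv [MeasurableAdd₂ E] (m n : Measure E) [IsFiniteMeasure m]
    [IsFiniteMeasure n] : averagingOp (m ∗ n) = averagingOp m * averagingOp n :=
  BCFOperator.ext_apply fun f x => by
    change ∫ z, f (x + z) ∂(m ∗ n) = ∫ y, ∫ z, f (x + y + z) ∂n ∂m
    simp only [integral_conv (integrable_comp_const_add (m ∗ n) f x), add_assoc]

variable (E) in
/-- The algebra generated by the averaging operators of finite measures. It is commutative because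
convolution is. -/
noncomputable def averagingAlgebra : Subalgebra ℝ (BCFOperator E) :=
  Algebra.adjoin ℝ {X | ∃ (m : Measure E) (_ : IsFiniteMeasure m), averagingOp m = X}

theorem averagingAlgebra_mul_comm [MeasurableAdd₂ E] (X Y : averagingAlgebra E) :
    X * Y = Y * X := by
  have hcomm := Algebra.isMulCommutative_adjoin ℝ
    (s := {X | ∃ (m : Measure E) (_ : IsFiniteMeasure m), averagingOp m = X}) <| by
      rintro _ ⟨m, _, rfl⟩ _ ⟨n, _, rfl⟩
      simp only [← averagingOp_conv, Measure.conv_comm m n]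
  exact hcomm.is_comm.comm X Y

noncomputable instance [MeasurableAdd₂ E] : NormedCommRing (averagingAlgebra E) where
  __ := (inferInstance : NormedRing (averagingAlgebra E))
  mul_comm := averagingAlgebra_mul_comm

noncomputable instance [MeasurableAdd₂ E] : NormedAlgebra ℝ (averagingAlgebra E) where
  __ := (inferInstance : Algebra ℝ (averagingAlgebra E))
  norm_smul_le c X := norm_smul_le c (X : BCFOperator E)

instance [MeasurableAdd₂ E] [Nonempty E] : NormOneClass (averagingAlgebra E) :=
  ⟨le_antisymm (ContinuousLinearMap.norm_id_le (E := E →ᵇ ℝ)) <| by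
    have h := BCFOperator.norm_apply_le 1 (1 : E →ᵇ ℝ) (Classical.arbitrary E)
    change ‖(1 : ℝ)‖ ≤ ‖(1 : averagingAlgebra E)‖ * ‖(1 : E →ᵇ ℝ)‖ at h
    simpa using h⟩

/-- The averaging operator of `m` as an element of the commutative algebra. -/
noncomputable def averaging (m : Measure E) [h : IsFiniteMeasure m] : averagingAlgebra E :=
  ⟨averagingOp m, Algebra.subset_adjoin ⟨m, h, rfl⟩⟩

theorem averaging_apply (m : Measure E) [IsFiniteMeasure m] (f : E →ᵇ ℝ) (x : E) :
    (averaging m : BCFOperator E) f x = ∫ y, f (x + y) ∂m := rfl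

theorem averaging_add (m n : Measure E) [IsFiniteMeasure m] [IsFiniteMeasure n] :
    averaging (m + n) = averaging m + averaging n :=
  Subtype.ext (averagingOp_add m n)

theorem averaging_smul (c : ℝ≥0) (m : Measure E) [IsFiniteMeasure m] :
    averaging (c • m) = (c : ℝ) • averaging m :=
  Subtype.ext (averagingOp_smul c m)

theorem averaging_conv [MeasurableAdd₂ E] (m n : Measure E) [IsFiniteMeasure m]
    [IsFiniteMeasure n] : averaging (m ∗ n) = averaging m * averaging n :=
  Subtype.ext (averagingOp_conv m n)

theorem norm_averaging_le_one (m : Measure E) [IsProbabilityMeasure m] : ‖averaging m‖ ≤ 1 :=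
  BCFOperator.norm_le_of_forall_apply zero_le_one fun f x => by
    change ‖∫ y, f (x + y) ∂m‖ ≤ _
    simpa using norm_integral_comp_const_add_le m f x

end Averaging

section Dilation

open scoped BoundedContinuousFunction

variable {E : Type*} [NormedAddCommGroup E] [NormedSpace ℝ E]

/-- The substitution operator `f ↦ (x ↦ f (exp v • x))`. -/
noncomputable def dilationOp (v : ℝ) : BCFOperator E :=
  LinearMap.mkContinuous
    { toFun := fun f => f.compContinuous ⟨fun x => Real.exp v • x, by fun_prop⟩
      map_add' := fun _ _ => rfl
      map_smul' := fun _ _ => rfl } 1 fun f => by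
    rw [one_mul]
    exact (BoundedContinuousFunction.norm_le (norm_nonneg _)).2 fun x => f.norm_coe_le_norm _

theorem norm_dilationOp_le_one (v : ℝ) : ‖(dilationOp v : BCFOperator E)‖ ≤ 1 :=
  LinearMap.mkContinuous_norm_le _ zero_le_one _

theorem dilationOp_mul_dilationOp_neg (v : ℝ) :
    (dilationOp v * dilationOp (-v) : BCFOperator E) = 1 :=
  BCFOperator.ext_apply fun f x => by
    change f (Real.exp (-v) • Real.exp v • x) = f x
    rw [smul_smul, ← Real.exp_add, neg_add_cancel, Real.exp_zero, one_smul]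

theorem dilationOp_neg_mul_dilationOp (v : ℝ) :
    (dilationOp (-v) * dilationOp v : BCFOperator E) = 1 := by
  simpa using dilationOp_mul_dilationOp_neg (E := E) (-v)

variable (E) in
/-- Conjugation of operators by the dilation of logarithmic ratio `v`. -/
noncomputable def dilationConj (v : ℝ) : BCFOperator E →+* BCFOperator E where
  toFun X := dilationOp (-v) * X * dilationOp v
  map_one' := by rw [mul_one, dilationOp_neg_mul_dilationOp]
  map_zero' := by rw [mul_zero, zero_mul]
  map_add' X Y := by rw [mul_add, add_mul]
  map_mul' X Y := by
    calc dilationOp (-v) * (X * Y) * dilationOp v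
        = dilationOp (-v) * X * 1 * Y * dilationOp v := by simp only [mul_one, mul_assoc]
      _ = _ := by rw [← dilationOp_mul_dilationOp_neg v]; simp only [mul_assoc]

theorem norm_dilationConj_le (v : ℝ) (X : BCFOperator E) : ‖dilationConj E v X‖ ≤ ‖X‖ :=
  calc ‖dilationOp (-v) * X * dilationOp v‖
      ≤ ‖(dilationOp (-v) : BCFOperator E)‖ * ‖X‖ * ‖(dilationOp v : BCFOperator E)‖ := norm_mul₃_le
    _ ≤ 1 * ‖X‖ * 1 := by gcongr <;> exact norm_dilationOp_le_one _
    _ = ‖X‖ := by rw [one_mul, mul_one]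

variable [MeasurableSpace E]

/-- The image of a measure under multiplication by `exp v`; the logarithmic parametrisation makes
composition additive in `v`. -/
noncomputable def dilate (v : ℝ) (m : Measure E) : Measure E :=
  m.map fun y => Real.exp v • y

theorem dilate_zero (m : Measure E) : dilate 0 m = m := by
  simp [dilate]

variable [BorelSpace E]

instance (v : ℝ) (m : Measure E) [IsProbabilityMeasure m] : IsProbabilityMeasure (dilate v m) :=
  Measure.isProbabilityMeasure_map (by fun_prop)

theorem dilate_dilate (v w : ℝ) (m : Measure E) : dilate v (dilate w m) = dilate (v + w) m := by
  rw [dilate, dilate, Measure.map_map (by fun_prop) (by fun_prop)]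
  simp only [Function.comp_def, smul_smul, ← Real.exp_add, dilate]

theorem lintegral_dilate (v : ℝ) (m : Measure E) {f : E → ENNReal} (hf : Measurable f) :
    ∫⁻ y, f y ∂dilate v m = ∫⁻ y, f (Real.exp v • y) ∂m :=
  lintegral_map hf (by fun_prop)

theorem integral_dilate (v : ℝ) (m : Measure E) {f : E → ℝ} (hf : Continuous f) :
    ∫ y, f y ∂dilate v m = ∫ y, f (Real.exp v • y) ∂m :=
  integral_map (by fun_prop) hf.aestronglyMeasurable

theorem dilationConj_averagingOp (v : ℝ) (m : Measure E) [IsProbabilityMeasure m] :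
    dilationConj E v (averagingOp m) = averagingOp (dilate v m) :=
  BCFOperator.ext_apply fun f x => by
    change ∫ y, f (Real.exp v • (Real.exp (-v) • x + y)) ∂m = ∫ y, f (x + y) ∂dilate v m
    rw [integral_dilate v m (f := fun y => f (x + y)) (by fun_prop)]
    simp only [smul_add, smul_smul, ← Real.exp_add, add_neg_cancel, Real.exp_zero, one_smul]

theorem norm_pow_mul_averaging_dilate_le (v : ℝ) (a m : Measure E) [IsProbabilityMeasure a]
    [IsProbabilityMeasure m] (k : ℕ) :
    ‖(averaging (dilate v a) * (1 - averaging (dilate v a))) ^ k * averaging (dilate v m)‖ ≤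
      ‖(averaging a * (1 - averaging a)) ^ k * averaging m‖ := by
  let ι : averagingAlgebra E →+* BCFOperator E := (averagingAlgebra E).val.toRingHom
  have hι (n : Measure E) [IsProbabilityMeasure n] :
      ι (averaging (dilate v n)) = dilationConj E v (ι (averaging n)) :=
    (dilationConj_averagingOp v n).symm
  calc ‖ι ((averaging (dilate v a) * (1 - averaging (dilate v a))) ^ k *
          averaging (dilate v m))‖
      = ‖dilationConj E v (ι ((averaging a * (1 - averaging a)) ^ k * averaging m))‖ := by
        simp only [map_mul, map_pow, map_sub, map_one, hι]
    _ ≤ ‖ι ((averaging a * (1 - averaging a)) ^ k * averaging m)‖ := norm_dilationConj_le v _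

variable [SecondCountableTopology E]

theorem dilate_conv (v : ℝ) (m n : Measure E) [IsFiniteMeasure m] [IsFiniteMeasure n] :
    dilate v (m ∗ n) = dilate v m ∗ dilate v n :=
  Measure.map_conv_addMonoidHom (DistribSMul.toAddMonoidHom E (Real.exp v))
    (measurable_const_smul _)

end Dilation

section ExponentialLaw

open Filter Topology ProbabilityTheory
open scoped BoundedContinuousFunction NNReal

/-- The exponential law of mean `exp u`. -/
noncomputable def expLaw (u : ℝ) : Measure ℝ :=
  expMeasure (Real.exp (-u))

instance (u : ℝ) : IsProbabilityMeasure (expLaw u) :=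
  isProbabilityMeasure_expMeasure (Real.exp_pos _)

theorem expLaw_eq_withDensity (u : ℝ) :
    expLaw u = volume.withDensity (exponentialPDF (Real.exp (-u))) := rfl

theorem expLaw_absolutelyContinuous (u : ℝ) : expLaw u ≪ volume :=
  withDensity_absolutelyContinuous _ _

theorem measurable_exponentialPDF (r : ℝ) : Measurable (exponentialPDF r) :=
  (measurable_exponentialPDFReal r).ennreal_ofReal

theorem lintegral_enorm_expLaw (u : ℝ) : ∫⁻ y, ‖y‖ₑ ∂expLaw u = ENNReal.ofReal (Real.exp u) := by
  have hr := Real.exp_pos (-u)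
  have hdensity (y : ℝ) : exponentialPDF (Real.exp (-u)) y * ‖y‖ₑ =
      ENNReal.ofReal (Real.exp u) * gammaPDF 2 (Real.exp (-u)) y := by
    rcases lt_or_ge y 0 with hy | hy
    · rw [exponentialPDF_of_neg hy, gammaPDF_of_neg hy, zero_mul, mul_zero]
    · have hexp : Real.exp u * Real.exp (-u) = 1 := by
        rw [← Real.exp_add, add_neg_cancel, Real.exp_zero]
      rw [exponentialPDF_of_nonneg hy, gammaPDF_of_nonneg hy, Real.enorm_of_nonneg hy,
        ← ENNReal.ofReal_mul (by positivity), ← ENNReal.ofReal_mul (by positivity),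
        Real.Gamma_two, div_one, Real.rpow_two, show (2 : ℝ) - 1 = 1 by norm_num, Real.rpow_one]
      congr 1
      linear_combination (-Real.exp (-u) * y * Real.exp (-(Real.exp (-u) * y))) * hexp
  rw [expLaw_eq_withDensity, lintegral_withDensity_eq_lintegral_mul _
    (measurable_exponentialPDF _) (by fun_prop)]
  simp only [Pi.mul_apply, hdensity]
  rw [lintegral_const_mul' _ _ ENNReal.ofReal_ne_top, lintegral_gammaPDF_eq_one two_pos hr, mul_one]

theorem charFun_expMeasure {r : ℝ} (hr : 0 < r) (ξ : ℝ) :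
    charFun (expMeasure r) ξ = r / (r - Complex.I * ξ) := by
  have hdensity : ∫ x, Complex.exp (ξ * x * Complex.I) ∂expMeasure r =
      ∫ x : ℝ in Set.Ioi 0, r * Complex.exp ((Complex.I * ξ - r) * x) := by
    change ∫ x, Complex.exp (ξ * x * Complex.I) ∂volume.withDensity (exponentialPDF r) = _
    rw [integral_withDensity_eq_integral_toReal_smul (measurable_exponentialPDF r)
      (Eventually.of_forall fun x => ENNReal.ofReal_lt_top), ← integral_Ici_eq_integral_Ioi,
      ← integral_indicator measurableSet_Ici]
    refine integral_congr_ae (Eventually.of_forall fun x => ?_)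
    rcases lt_or_ge x 0 with hx | hx
    · simp [exponentialPDF_of_neg hx, hx]
    · have hmem : x ∈ Set.Ici 0 := hx
      simp only [exponentialPDF_of_nonneg hx, Set.indicator_of_mem hmem, Complex.real_smul]
      rw [ENNReal.toReal_ofReal (by positivity), Complex.ofReal_mul, Complex.ofReal_exp, mul_assoc,
        ← Complex.exp_add]
      congr 2
      push_cast
      ring
  rw [charFun_apply_real, hdensity, integral_const_mul, integral_exp_mul_complex_Ioi (by simpa),
    Complex.ofReal_zero, mul_zero, Complex.exp_zero, ← neg_sub (r : ℂ), neg_div_neg_eq,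
    mul_one_div]

theorem charFun_expLaw (u ξ : ℝ) :
    charFun (expLaw u) ξ = 1 / (1 - Complex.I * (Real.exp u * ξ)) := by
  have hu : (Real.exp u : ℂ) ≠ 0 := by exact_mod_cast (Real.exp_pos u).ne'
  rw [expLaw, charFun_expMeasure (Real.exp_pos _), Real.exp_neg, Complex.ofReal_inv]
  field_simp

theorem dilate_expLaw (v u : ℝ) : dilate v (expLaw u) = expLaw (v + u) := by
  refine Measure.ext_of_charFun (funext fun ξ => ?_)
  rw [dilate, charFun_map_smul, charFun_expLaw, charFun_expLaw, Real.exp_add, smul_eq_mul]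
  push_cast
  ring_nf

theorem charFun_add_smul {m n : Measure ℝ} [IsFiniteMeasure m] [IsFiniteMeasure n] (a b : ℝ≥0)
    (ξ : ℝ) : charFun (a • m + b • n) ξ = a * charFun m ξ + b * charFun n ξ := by
  have hint (k : Measure ℝ) [IsFiniteMeasure k] :
      Integrable (fun x : ℝ => Complex.exp (ξ * x * Complex.I)) k :=
    .of_bound (C := 1) (by fun_prop) (Eventually.of_forall fun y => by
      rw [← Complex.ofReal_mul, Complex.norm_exp_ofReal_mul_I])
  simp only [charFun_apply_real]
  rw [integral_add_measure (hint _) (hint _), integral_smul_nnreal_measure,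
    integral_smul_nnreal_measure]
  rfl

theorem expLaw_eq_add_conv {s t : ℝ} {a b : ℝ≥0} (ha : a = Real.exp (s - t)) (hab : a + b = 1) :
    expLaw t = a • expLaw s + b • (expLaw s ∗ expLaw t) := by
  refine Measure.ext_of_charFun (funext fun ξ => ?_)
  have hne (r : ℝ) : (1 : ℂ) - Complex.I * (r * ξ) ≠ 0 := fun h => by
    simpa using congrArg Complex.re h
  have hs := hne (Real.exp s)
  have ht := hne (Real.exp t)
  have hst : (Real.exp s : ℂ) = a * Real.exp t := by
    rw [← Complex.ofReal_mul, ha, ← Real.exp_add, sub_add_cancel]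
  have hb : (b : ℂ) = 1 - a := eq_sub_of_add_eq' (by exact_mod_cast hab)
  have hdiff : 1 - Complex.I * (Real.exp s * ξ) - a * (1 - Complex.I * (Real.exp t * ξ)) = b := by
    rw [hst, hb]; ring
  rw [charFun_add_smul, charFun_conv, charFun_expLaw, charFun_expLaw]
  generalize 1 - Complex.I * (Real.exp s * ξ) = P at *
  generalize 1 - Complex.I * (Real.exp t * ξ) = Q at *
  field_simp
  linear_combination hdiff

/-- The averaging operator of the exponential law of mean `exp u`, that is, the resolvent
`(1 - exp u • d/dx)⁻¹` of the translation semigroup. -/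
noncomputable def expResolvent (u : ℝ) : averagingAlgebra ℝ :=
  averaging (expLaw u)

theorem norm_expResolvent_le_one (u : ℝ) : ‖expResolvent u‖ ≤ 1 :=
  norm_averaging_le_one _

theorem expResolvent_eq_add {s t : ℝ} {a b : ℝ≥0} (ha : a = Real.exp (s - t)) (hab : a + b = 1) :
    expResolvent t = (a : ℝ) • expResolvent s + (b : ℝ) • (expResolvent s * expResolvent t) := by
  have h : expResolvent t = averaging (a • expLaw s + b • (expLaw s ∗ expLaw t)) := by
    simp only [← expLaw_eq_add_conv ha hab, expResolvent]
  refine h.trans ?_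
  rw [averaging_add, averaging_smul, averaging_smul, averaging_conv]
  rfl

theorem exists_nnreal_eq_exp_of_nonpos {x : ℝ} (hx : x ≤ 0) :
    ∃ a b : ℝ≥0, a = Real.exp x ∧ a + b = 1 := by
  refine ⟨⟨Real.exp x, (Real.exp_pos x).le⟩,
    ⟨1 - Real.exp x, sub_nonneg.2 (Real.exp_le_one_iff.2 hx)⟩, rfl, ?_⟩
  exact NNReal.eq (add_sub_cancel _ _)

theorem exp_smul_expResolvent_sub (s t : ℝ) :
    Real.exp s • expResolvent s - Real.exp t • expResolvent t =
      (Real.exp s - Real.exp t) • (expResolvent s * expResolvent t) := by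
  wlog hst : s ≤ t generalizing s t
  · rw [← neg_sub, this t s (le_of_not_ge hst), ← neg_smul, neg_sub, mul_comm]
  obtain ⟨a, b, ha, hab⟩ := exists_nnreal_eq_exp_of_nonpos (sub_nonpos.2 hst)
  have hb : (b : ℝ) = 1 - a := eq_sub_of_add_eq' (by exact_mod_cast hab)
  have hs : Real.exp s = Real.exp t * a := by rw [ha, ← Real.exp_add, add_sub_cancel]
  conv_lhs => rw [expResolvent_eq_add ha hab, hb, hs]
  rw [hs]
  module

theorem expResolvent_sub (s t : ℝ) : expResolvent s - expResolvent t =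
    (1 - Real.exp (s - t)) • (expResolvent s * (1 - expResolvent t)) := by
  refine smul_right_injective _ (Real.exp_pos t).ne' ?_
  have hs : Real.exp t * Real.exp (s - t) = Real.exp s := by rw [← Real.exp_add, add_sub_cancel]
  have h := exp_smul_expResolvent_sub s t
  simp only [smul_smul, mul_sub, mul_one, hs, smul_sub]
  rw [sub_smul, sub_smul] at *
  linear_combination h

theorem isLogistic_expResolvent : IsLogistic expResolvent := fun v => by
  have hfactor : HasDerivAt (fun u => 1 - Real.exp (u - v)) (-1) v := by
    simpa using (((hasDerivAt_id v).sub_const v).exp).const_sub 1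
  have hfactor0 : Tendsto (fun u => |1 - Real.exp (u - v)| * 2) (𝓝 v) (𝓝 0) := by
    simpa using (hfactor.continuousAt.abs.mul_const 2).tendsto
  have hcont : Tendsto expResolvent (𝓝 v) (𝓝 (expResolvent v)) := by
    rw [tendsto_iff_norm_sub_tendsto_zero]
    refine squeeze_zero (fun _ => norm_nonneg _) (fun u => ?_) hfactor0
    rw [expResolvent_sub, norm_smul, Real.norm_eq_abs]
    gcongr
    have h := norm_pow_mul_one_sub_pow_mul_le (norm_expResolvent_le_one v) (expResolvent u) 0 1
    rw [pow_zero, one_mul, pow_one, pow_one, mul_comm] at h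
    linarith [norm_expResolvent_le_one u]
  rw [hasDerivAt_iff_tendsto_slope] at hfactor ⊢
  have hprod := hfactor.smul
    ((hcont.mul_const (1 - expResolvent v)).mono_left (nhdsWithin_le_nhds (s := {v}ᶜ)))
  rw [neg_one_smul] at hprod
  refine hprod.congr fun u => ?_
  simp [slope_def_module, expResolvent_sub, smul_smul]

theorem tendsto_integral_expLaw {ι : Type*} {l : Filter ι} [l.IsCountablyGenerated] {x : ι → ℝ}
    (hx : Tendsto x l atBot) (g : ℝ →ᵇ ℝ) :
    Tendsto (fun n => ∫ y, g y ∂expLaw (x n)) l (𝓝 (g 0)) := by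
  have hscale (n : ι) : ∫ y, g y ∂expLaw (x n) = ∫ y, g (Real.exp (x n) * y) ∂expLaw 0 := by
    rw [← add_zero (x n), ← dilate_expLaw, integral_dilate _ _ g.continuous, add_zero]; rfl
  have hconst : g 0 = ∫ _, g 0 ∂expLaw 0 := by simp
  simp only [hscale]
  rw [hconst]
  refine tendsto_integral_filter_of_dominated_convergence (fun _ => ‖g‖)
    (Eventually.of_forall fun n => (g.continuous.comp (by fun_prop)).aestronglyMeasurable)
    (Eventually.of_forall fun n => Eventually.of_forall fun y => g.norm_coe_le_norm _)
    (integrable_const _) (Eventually.of_forall fun y => (g.continuous.tendsto 0).comp ?_)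
  simpa using (Real.tendsto_exp_atBot.comp hx).mul_const y

/-- `ρ * (1 - ρ) = -ρ'` for the resolvent curve `ρ`, whose decay at `-∞` is the crux. -/
noncomputable def expTransition (u : ℝ) : averagingAlgebra ℝ :=
  expResolvent u * (1 - expResolvent u)

theorem norm_expTransition_pow_mul_averaging_dilate_le (v u : ℝ) (k : ℕ) (m : Measure ℝ)
    [IsProbabilityMeasure m] :
    ‖expTransition u ^ k * averaging (dilate v m)‖ ≤ ‖expTransition (u - v) ^ k * averaging m‖ := by
  have h := norm_pow_mul_averaging_dilate_le v (expLaw (u - v)) m k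
  simp only [dilate_expLaw, add_sub_cancel] at h
  exact h

end ExponentialLaw

section AbsoluteContinuity

open Filter Topology
open scoped BoundedContinuousFunction

theorem measureReal_le_add_of_abs_integral_sub_le {X : Type*} [PseudoEMetricSpace X]
    [MeasurableSpace X] [OpensMeasurableSpace X] {m n : Measure X} [IsFiniteMeasure m]
    [IsFiniteMeasure n] {ε : ℝ} (hε : 0 ≤ ε)
    (h : ∀ f : X →ᵇ ℝ, |∫ x, f x ∂m - ∫ x, f x ∂n| ≤ ε * ‖f‖) {K : Set X} (hK : IsClosed K) :
    m.real K ≤ n.real K + ε := by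
  have hδ (k : ℕ) : (0 : ℝ) < 1 / (k + 1) := by positivity
  have hlim (l : Measure X) [IsFiniteMeasure l] :=
    tendsto_integral_thickenedIndicator_of_isClosed l hK hδ
      tendsto_one_div_add_atTop_nhds_zero_nat
  refine le_of_tendsto_of_tendsto' (hlim m) ((hlim n).add_const ε) fun k => ?_
  have hle (x : X) : ‖(thickenedIndicator (hδ k) K x : ℝ)‖ ≤ 1 := by
    rw [NNReal.norm_eq]
    exact_mod_cast thickenedIndicator_le_one (hδ k) K x
  let f : X →ᵇ ℝ := .ofNormedAddCommGroup (fun x => thickenedIndicator (hδ k) K x)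
    (by fun_prop) 1 hle
  have hf : ε * ‖f‖ ≤ ε := mul_le_of_le_one_right hε
    (BoundedContinuousFunction.norm_ofNormedAddCommGroup_le _ zero_le_one hle)
  linarith [(le_abs_self _).trans ((h f).trans hf),
    show ∫ x, f x ∂m = ∫ x, (thickenedIndicator (hδ k) K x : ℝ) ∂m from rfl,
    show ∫ x, f x ∂n = ∫ x, (thickenedIndicator (hδ k) K x : ℝ) ∂n from rfl]

theorem absolutelyContinuous_of_forall_abs_integral_sub_le {X : Type*} [EMetricSpace X]
    [MeasurableSpace X] [BorelSpace X] {m V : Measure X} [IsFiniteMeasure m]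
    [m.InnerRegularCompactLTTop]
    (h : ∀ ε > 0, ∃ n : Measure X, IsFiniteMeasure n ∧ n ≪ V ∧
      ∀ f : X →ᵇ ℝ, |∫ x, f x ∂m - ∫ x, f x ∂n| ≤ ε * ‖f‖) : m ≪ V := by
  have hcompact (K : Set X) (hK : IsCompact K) (hVK : V K = 0) : m K = 0 := by
    rw [← measureReal_eq_zero_iff]
    refine le_antisymm (le_of_forall_pos_le_add fun ε hε => ?_) measureReal_nonneg
    obtain ⟨n, _, hnV, hn⟩ := h ε hε
    simpa [Measure.real, hnV hVK] using
      measureReal_le_add_of_abs_integral_sub_le hε.le hn hK.isClosed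
  refine Measure.AbsolutelyContinuous.mk fun A hA hVA => ?_
  rw [hA.measure_eq_iSup_isCompact_of_ne_top (measure_ne_top m A)]
  simp only [ENNReal.iSup_eq_zero]
  exact fun K hKA hK => hcompact K hK (measure_mono_null hKA hVA)

theorem expResolvent_mul_averaging_apply_zero (u : ℝ) (m : Measure ℝ) [IsFiniteMeasure m]
    (f : ℝ →ᵇ ℝ) :
    ((expResolvent u * averaging m : averagingAlgebra ℝ) : BCFOperator ℝ) f 0 =
      ∫ y, f y ∂(expLaw u ∗ m) := by
  rw [expResolvent, ← averaging_conv, averaging_apply]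
  simp only [zero_add]

theorem tendsto_expResolvent_mul_averaging_apply_zero {x : ℕ → ℝ} (hx : Tendsto x atTop atBot)
    (m : Measure ℝ) [IsFiniteMeasure m] (f : ℝ →ᵇ ℝ) :
    Tendsto (fun n => ((expResolvent (x n) * averaging m : averagingAlgebra ℝ) :
      BCFOperator ℝ) f 0) atTop (𝓝 (∫ y, f y ∂m)) := by
  have h := tendsto_integral_expLaw hx ((averaging m : BCFOperator ℝ) f)
  simp only [averaging_apply, zero_add] at h
  refine h.congr fun n => ?_
  change _ = ∫ y, ((averaging m : BCFOperator ℝ) f) (0 + y) ∂expLaw (x n)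
  simp only [averaging_apply, zero_add]

theorem absolutelyContinuous_of_cauchySeq {m : Measure ℝ} [IsFiniteMeasure m] {x : ℕ → ℝ}
    (hx : Tendsto x atTop atBot) (h : CauchySeq fun n => expResolvent (x n) * averaging m) :
    m ≪ volume := by
  refine absolutelyContinuous_of_forall_abs_integral_sub_le fun ε hε => ?_
  obtain ⟨N, hN⟩ := Metric.cauchySeq_iff.1 h ε hε
  refine ⟨m ∗ expLaw (x N), inferInstance,
    Measure.conv_absolutelyContinuous (expLaw_absolutelyContinuous _), fun f => ?_⟩
  refine le_of_tendsto
    ((tendsto_expResolvent_mul_averaging_apply_zero hx m f).sub_const _).abs ?_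
  filter_upwards [eventually_ge_atTop N] with n hn
  rw [Measure.conv_comm, ← expResolvent_mul_averaging_apply_zero]
  calc _ ≤ ‖expResolvent (x n) * averaging m - expResolvent (x N) * averaging m‖ * ‖f‖ :=
        BCFOperator.norm_apply_le
          ((expResolvent (x n) * averaging m - expResolvent (x N) * averaging m :
            averagingAlgebra ℝ) : BCFOperator ℝ) f 0
    _ ≤ ε * ‖f‖ := by
        gcongr
        rw [← dist_eq_norm]
        exact (hN n hn N le_rfl).le

end AbsoluteContinuity

section PointwisePinsker

open InformationTheory

theorem hasDerivAt_log_sub_div {y : ℝ} (hy : 0 < y) :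
    HasDerivAt (fun x => Real.log x - (5 * x ^ 2 - 4 * x - 1) / (2 * x ^ 2 + 4 * x))
      ((y - 1) ^ 3 / (y ^ 2 * (y + 2) ^ 2)) y := by
  have hnum : HasDerivAt (fun x : ℝ => 5 * x ^ 2 - 4 * x - 1) (10 * y - 4) y :=
    ((((hasDerivAt_pow 2 y).const_mul 5).sub ((hasDerivAt_id y).const_mul 4)).sub_const
      1).congr_deriv (by norm_num; ring)
  have hden : HasDerivAt (fun x : ℝ => 2 * x ^ 2 + 4 * x) (4 * y + 4) y :=
    (((hasDerivAt_pow 2 y).const_mul 2).add ((hasDerivAt_id y).const_mul 4)).congr_deriv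
      (by norm_num; ring)
  refine ((Real.hasDerivAt_log hy.ne').sub (hnum.div hden (by positivity))).congr_deriv ?_
  field_simp
  ring

theorem div_le_log {x : ℝ} (hx : 0 < x) :
    (5 * x ^ 2 - 4 * x - 1) / (2 * x ^ 2 + 4 * x) ≤ Real.log x := by
  suffices h : Real.log 1 - (5 * 1 ^ 2 - 4 * 1 - 1) / (2 * 1 ^ 2 + 4 * 1) ≤
      Real.log x - (5 * x ^ 2 - 4 * x - 1) / (2 * x ^ 2 + 4 * x) by
    norm_num at h
    linarith
  rcases le_total x 1 with h1 | h1
  · refine antitoneOn_of_hasDerivWithinAt_nonpos (convex_Icc x 1)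
      (fun y hy => (hasDerivAt_log_sub_div (hx.trans_le hy.1)).continuousAt.continuousWithinAt)
      (fun y hy => (hasDerivAt_log_sub_div
        (hx.trans_le (interior_subset hy).1)).hasDerivWithinAt)
      (fun y hy => div_nonpos_of_nonpos_of_nonneg ?_ (by positivity)) ⟨le_rfl, h1⟩ ⟨h1, le_rfl⟩ h1
    exact Odd.pow_nonpos (by decide) (sub_nonpos.2 (interior_subset hy).2)
  · refine monotoneOn_of_hasDerivWithinAt_nonneg (convex_Icc 1 x)
      (fun y hy => (hasDerivAt_log_sub_div
        (zero_lt_one.trans_le hy.1)).continuousAt.continuousWithinAt)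
      (fun y hy => (hasDerivAt_log_sub_div
        (zero_lt_one.trans_le (interior_subset hy).1)).hasDerivWithinAt)
      (fun y hy => div_nonneg ?_ (by positivity)) ⟨le_rfl, h1⟩ ⟨h1, le_rfl⟩ h1
    exact pow_nonneg (sub_nonneg.2 (interior_subset hy).1) 3

theorem sq_div_le_klFun {x : ℝ} (hx : 0 ≤ x) :
    3 * (x - 1) ^ 2 / (2 * (x + 2)) ≤ klFun x := by
  rcases hx.eq_or_lt with rfl | hx
  · norm_num [klFun_zero]
  · calc 3 * (x - 1) ^ 2 / (2 * (x + 2))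
        = x * ((5 * x ^ 2 - 4 * x - 1) / (2 * x ^ 2 + 4 * x)) + 1 - x := by field_simp; ring
      _ ≤ klFun x := by rw [klFun_apply]; gcongr; exact div_le_log hx

theorem mul_klFun_div (a : ℝ) {m : ℝ} (hm : m ≠ 0) :
    m * klFun (a / m) = m - a - a * Real.log m - Real.negMulLog a := by
  rcases eq_or_ne a 0 with rfl | ha
  · simp [klFun_zero]
  · rw [klFun_apply, Real.log_div ha hm, Real.negMulLog]
    field_simp
    ring

theorem negMulLog_le_sub {a m : ℝ} (ha : 0 ≤ a) (hm : 0 < m) :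
    Real.negMulLog a ≤ m - a - a * Real.log m := by
  have h := mul_nonneg hm.le (klFun_nonneg (div_nonneg ha hm.le))
  rw [mul_klFun_div a hm.ne'] at h
  linarith

/-- The quadratic lower bound for `klFun`, linearised at slope `c` so that it can be integrated. -/
theorem mul_abs_sub_sub_le_mul_klFun_div (c : ℝ) {a m : ℝ} (ha : 0 ≤ a) (hm : 0 < m) :
    c * |a - m| - c ^ 2 * (a + 2 * m) / 6 ≤ m * klFun (a / m) := by
  calc c * |a - m| - c ^ 2 * (a + 2 * m) / 6 ≤ 3 * |a - m| ^ 2 / (2 * (a + 2 * m)) := by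
        rw [le_div_iff₀ (by positivity)]
        nlinarith [sq_nonneg (c * (a + 2 * m) - 3 * |a - m|)]
    _ = m * (3 * (a / m - 1) ^ 2 / (2 * (a / m + 2))) := by rw [sq_abs]; field_simp
    _ ≤ m * klFun (a / m) := by gcongr; exact sq_div_le_klFun (by positivity)

theorem negMulLog_convexCombination_ge {w w' a b : ℝ} (hw : 0 ≤ w) (hw' : 0 ≤ w')
    (hww' : w + w' = 1) (ha : 0 ≤ a) (hb : 0 ≤ b) (c : ℝ) :
    w * Real.negMulLog a + w' * Real.negMulLog b +
        w * w' * (c * |a - b| - c ^ 2 / 6 * ((1 + w) * a + (1 + w') * b)) ≤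
      Real.negMulLog (w * a + w' * b) := by
  obtain ⟨f, hf⟩ : ∃ f, f = w * a + w' * b := ⟨_, rfl⟩
  rw [← hf]
  have hwa := mul_nonneg hw ha
  have hwb := mul_nonneg hw' hb
  rcases (hf ▸ add_nonneg hwa hwb : 0 ≤ f).eq_or_lt with h0 | h0
  · have hwa0 : w = 0 ∨ a = 0 := mul_eq_zero.1 (by linarith)
    have hwb0 : w' = 0 ∨ b = 0 := mul_eq_zero.1 (by linarith)
    rcases hwa0 with rfl | rfl <;> rcases hwb0 with rfl | rfl <;> simp [← h0]
  · have hbound (d x : ℝ) (hx : 0 ≤ x) := mul_abs_sub_sub_le_mul_klFun_div d hx h0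
    simp only [mul_klFun_div _ h0.ne'] at hbound
    have haf : |a - f| = w' * |a - b| := by
      rw [← abs_of_nonneg hw', ← abs_mul, hf, ← sub_eq_of_eq_add hww'.symm]; ring_nf
    have hbf : |b - f| = w * |a - b| := by
      rw [abs_sub_comm a, ← abs_of_nonneg hw, ← abs_mul, hf, eq_sub_of_add_eq' hww']; ring_nf
    have hA := mul_le_mul_of_nonneg_left (hbound (w' * c) a ha) hw
    have hB := mul_le_mul_of_nonneg_left (hbound (w * c) b hb) hw'
    rw [haf] at hA
    rw [hbf] at hB
    have hsum : w * (f - a - a * Real.log f - Real.negMulLog a) +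
        w' * (f - b - b * Real.log f - Real.negMulLog b) =
        Real.negMulLog f - w * Real.negMulLog a - w' * Real.negMulLog b := by
      rw [Real.negMulLog.eq_1 f]
      linear_combination f * hww' + (1 + Real.log f) * hf
    linear_combination hA + hB + hsum - w * w' * c * |a - b| * hww' +
      w * w' * c ^ 2 / 6 * ((a + b + 2 * f) * hww' + 2 * hf)

end PointwisePinsker

section Entropy

open Filter
open scoped NNReal

variable {α : Type*} [MeasurableSpace α] {V m n : Measure α} {h k : α → ℝ}

/-- `h` is a density of `m` with respect to `V` with values in `[0, 1]`, so that `negMulLog ∘ h` is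
nonnegative. Such a density exists when `m ≤ V`. -/
structure IsUnitDensity (V m : Measure α) (h : α → ℝ) : Prop where
  measurable : Measurable h
  nonneg : ∀ y, 0 ≤ h y
  le_one : ∀ y, h y ≤ 1
  eq_withDensity : m = V.withDensity fun y => ENNReal.ofReal (h y)

theorem exists_isUnitDensity_of_le [SigmaFinite V] [SigmaFinite m] (hle : m ≤ V) :
    ∃ h, IsUnitDensity V m h := by
  refine ⟨fun y => min 1 (m.rnDeriv V y).toReal,
    measurable_const.min (Measure.measurable_rnDeriv _ _).ennreal_toReal, fun y => by positivity,
    fun y => min_le_left _ _, ?_⟩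
  conv_lhs => rw [← Measure.withDensity_rnDeriv_eq m V (Measure.absolutelyContinuous_of_le hle)]
  refine withDensity_congr_ae ?_
  filter_upwards [Measure.rnDeriv_le_one_of_le hle] with y hy
  have hy1 : m.rnDeriv V y ≤ 1 := hy
  rw [min_eq_right (ENNReal.toReal_le_of_le_ofReal zero_le_one (by simpa using hy1)),
    ENNReal.ofReal_toReal (ne_top_of_le_ne_top ENNReal.one_ne_top hy1)]

namespace IsUnitDensity

theorem le (H : IsUnitDensity V m h) : m ≤ V := by
  rw [H.eq_withDensity]
  exact (withDensity_mono (Eventually.of_forall fun y =>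
    ENNReal.ofReal_le_one.2 (H.le_one y))).trans_eq withDensity_one

theorem lintegral_eq (H : IsUnitDensity V m h) {f : α → ENNReal} (hf : Measurable f) :
    ∫⁻ y, f y ∂m = ∫⁻ y, ENNReal.ofReal (h y) * f y ∂V := by
  rw [H.eq_withDensity]
  exact lintegral_withDensity_eq_lintegral_mul _ H.measurable.ennreal_ofReal hf

theorem integral_eq (H : IsUnitDensity V m h) (f : α → ℝ) :
    ∫ y, f y ∂m = ∫ y, h y * f y ∂V := by
  rw [H.eq_withDensity, integral_withDensity_eq_integral_toReal_smul H.measurable.ennreal_ofReal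
    (Eventually.of_forall fun y => ENNReal.ofReal_lt_top)]
  simp only [ENNReal.toReal_ofReal (H.nonneg _), smul_eq_mul]

theorem integrable_mul (H : IsUnitDensity V m h) {f : α → ℝ} (hf : Integrable f m) :
    Integrable (fun y => h y * f y) V := by
  rw [H.eq_withDensity, integrable_withDensity_iff_integrable_smul' H.measurable.ennreal_ofReal
    (Eventually.of_forall fun y => ENNReal.ofReal_lt_top)] at hf
  simpa only [ENNReal.toReal_ofReal (H.nonneg _), smul_eq_mul] using hf

theorem integrable [IsFiniteMeasure m] (H : IsUnitDensity V m h) : Integrable h V := by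
  simpa using H.integrable_mul (integrable_const 1)

theorem integral_eq_one [IsProbabilityMeasure m] (H : IsUnitDensity V m h) :
    ∫ y, h y ∂V = 1 := by
  simpa using (H.integral_eq fun _ => 1).symm

theorem measurable_negMulLog (H : IsUnitDensity V m h) :
    Measurable fun y => Real.negMulLog (h y) :=
  Real.continuous_negMulLog.measurable.comp H.measurable

theorem negMulLog_nonneg (H : IsUnitDensity V m h) (y : α) : 0 ≤ Real.negMulLog (h y) :=
  Real.negMulLog_nonneg (H.nonneg y) (H.le_one y)

theorem convexCombination (H : IsUnitDensity V m h) (K : IsUnitDensity V n k) {w w' : ℝ≥0}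
    (hww' : w + w' = 1) :
    IsUnitDensity V (w • m + w' • n) fun y => (w : ℝ) * h y + (w' : ℝ) * k y where
  measurable := (H.measurable.const_mul _).add (K.measurable.const_mul _)
  nonneg y := add_nonneg (mul_nonneg w.2 (H.nonneg y)) (mul_nonneg w'.2 (K.nonneg y))
  le_one y := by
    have : (w : ℝ) + w' = 1 := by exact_mod_cast hww'
    linarith [mul_le_mul_of_nonneg_left (H.le_one y) w.coe_nonneg,
      mul_le_mul_of_nonneg_left (K.le_one y) w'.coe_nonneg]
  eq_withDensity := by
    conv_lhs => rw [H.eq_withDensity, K.eq_withDensity]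
    simp only [ENNReal.smul_def]
    rw [← withDensity_smul _ H.measurable.ennreal_ofReal,
      ← withDensity_smul _ K.measurable.ennreal_ofReal,
      ← withDensity_add_left (H.measurable.ennreal_ofReal.const_smul _)]
    congr 1 with y
    rw [ENNReal.ofReal_add (mul_nonneg w.coe_nonneg (H.nonneg y))
        (mul_nonneg w'.coe_nonneg (K.nonneg y)), ENNReal.ofReal_mul w.coe_nonneg,
      ENNReal.ofReal_mul w'.coe_nonneg, ENNReal.ofReal_coe_nnreal, ENNReal.ofReal_coe_nnreal]
    rfl

end IsUnitDensity

/-- The differential entropy of `m` with respect to the reference measure `V`. -/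
noncomputable def diffEntropy (V m : Measure α) : ℝ :=
  ∫ y, Real.negMulLog (m.rnDeriv V y).toReal ∂V

namespace IsUnitDensity

theorem diffEntropy_eq [SigmaFinite V] (H : IsUnitDensity V m h) :
    diffEntropy V m = ∫ y, Real.negMulLog (h y) ∂V := by
  have hrn := Measure.rnDeriv_withDensity V H.measurable.ennreal_ofReal
  rw [← H.eq_withDensity] at hrn
  refine integral_congr_ae ?_
  filter_upwards [hrn] with y hy
  rw [hy, ENNReal.toReal_ofReal (H.nonneg y)]

theorem diffEntropy_nonneg [SigmaFinite V] (H : IsUnitDensity V m h) : 0 ≤ diffEntropy V m :=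
  H.diffEntropy_eq ▸ integral_nonneg H.negMulLog_nonneg

theorem integrable_gibbs [IsFiniteMeasure m] (H : IsUnitDensity V m h) {p : α → ℝ}
    (hp : Integrable p V) (hlog : Integrable (fun y => Real.log (p y)) m) :
    Integrable (fun y => p y - h y - h y * Real.log (p y)) V :=
  (hp.sub H.integrable).sub (H.integrable_mul hlog)

theorem integrable_negMulLog [IsFiniteMeasure m] (H : IsUnitDensity V m h) {p : α → ℝ}
    (hp0 : ∀ y, 0 < p y) (hp : Integrable p V) (hlog : Integrable (fun y => Real.log (p y)) m) :
    Integrable (fun y => Real.negMulLog (h y)) V := by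
  refine (H.integrable_gibbs hp hlog).mono' H.measurable_negMulLog.aestronglyMeasurable
    (Eventually.of_forall fun y => ?_)
  rw [Real.norm_of_nonneg (H.negMulLog_nonneg y)]
  exact negMulLog_le_sub (H.nonneg y) (hp0 y)

theorem diffEntropy_le_crossEntropy [SigmaFinite V] [IsProbabilityMeasure m]
    (H : IsUnitDensity V m h) {p : α → ℝ} (hp0 : ∀ y, 0 < p y) (hp : Integrable p V)
    (hlog : Integrable (fun y => Real.log (p y)) m) :
    diffEntropy V m ≤ (∫ y, p y ∂V) - 1 - ∫ y, Real.log (p y) ∂m := by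
  rw [H.diffEntropy_eq, H.integral_eq fun y => Real.log (p y), ← H.integral_eq_one,
    ← integral_sub hp H.integrable,
    ← integral_sub (f := fun y => p y - h y) (hp.sub H.integrable) (H.integrable_mul hlog)]
  exact integral_mono (H.integrable_negMulLog hp0 hp hlog) (H.integrable_gibbs hp hlog)
    fun y => negMulLog_le_sub (H.nonneg y) (hp0 y)

theorem diffEntropy_convexCombination_ge [SigmaFinite V] [IsProbabilityMeasure m]
    [IsProbabilityMeasure n] (H : IsUnitDensity V m h) (K : IsUnitDensity V n k) {w w' : ℝ≥0}
    (hww' : w + w' = 1) (hint : Integrable (fun y => Real.negMulLog (h y)) V)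
    (kint : Integrable (fun y => Real.negMulLog (k y)) V)
    (hkint : Integrable (fun y => Real.negMulLog (w * h y + w' * k y)) V) :
    w * diffEntropy V m + w' * diffEntropy V n + w * w' * (∫ y, |h y - k y| ∂V) ^ 2 / 2 ≤
      diffEntropy V (w • m + w' • n) := by
  have hsum : (w : ℝ) + w' = 1 := by exact_mod_cast hww'
  set N := ∫ y, |h y - k y| ∂V with hN
  have hNint : Integrable (fun y => |h y - k y|) V := (H.integrable.sub K.integrable).abs
  have hhk : Integrable (fun y => (1 + w) * h y + (1 + w') * k y) V :=
    (H.integrable.const_mul _).add (K.integrable.const_mul _)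
  have hhk3 : ∫ y, (1 + w) * h y + (1 + w') * k y ∂V = 3 := by
    rw [integral_add (H.integrable.const_mul _) (K.integrable.const_mul _), integral_const_mul,
      integral_const_mul, H.integral_eq_one, K.integral_eq_one]
    linarith
  have hneg : Integrable (fun y => w * Real.negMulLog (h y) + w' * Real.negMulLog (k y)) V :=
    (hint.const_mul _).add (kint.const_mul _)
  have hgain : Integrable (fun y => w * w' *
      (N * |h y - k y| - N ^ 2 / 6 * ((1 + w) * h y + (1 + w') * k y))) V :=
    ((hNint.const_mul _).sub (hhk.const_mul _)).const_mul _
  calc w * diffEntropy V m + w' * diffEntropy V n + w * w' * N ^ 2 / 2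
      = ∫ y, w * Real.negMulLog (h y) + w' * Real.negMulLog (k y) + w * w' *
          (N * |h y - k y| - N ^ 2 / 6 * ((1 + w) * h y + (1 + w') * k y)) ∂V := by
        rw [integral_add hneg hgain, integral_add (hint.const_mul _) (kint.const_mul _),
          integral_const_mul (w * w' : ℝ), integral_sub (hNint.const_mul _) (hhk.const_mul _)]
        simp only [integral_const_mul, hhk3, ← hN, H.diffEntropy_eq, K.diffEntropy_eq]
        ring
    _ ≤ diffEntropy V (w • m + w' • n) := by
        rw [(H.convexCombination K hww').diffEntropy_eq]
        exact integral_mono (hneg.add hgain) hkint fun y => negMulLog_convexCombination_ge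
          w.coe_nonneg w'.coe_nonneg hsum (H.nonneg y) (K.nonneg y) N

end IsUnitDensity

theorem norm_averaging_sub_le {V m n : Measure ℝ} {h k : ℝ → ℝ} [IsFiniteMeasure m]
    [IsFiniteMeasure n] (H : IsUnitDensity V m h) (K : IsUnitDensity V n k) :
    ‖averaging m - averaging n‖ ≤ ∫ y, |h y - k y| ∂V := by
  refine BCFOperator.norm_le_of_forall_apply (integral_nonneg fun y => abs_nonneg _) fun f x => ?_
  change ‖∫ y, f (x + y) ∂m - ∫ y, f (x + y) ∂n‖ ≤ _
  rw [H.integral_eq, K.integral_eq,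
    ← integral_sub (H.integrable_mul (integrable_comp_const_add m f x))
      (K.integrable_mul (integrable_comp_const_add n f x)), ← integral_mul_const]
  refine norm_integral_le_of_norm_le ((H.integrable.sub K.integrable).abs.mul_const _)
    (Eventually.of_forall fun y => ?_)
  rw [← sub_mul, norm_mul, Real.norm_eq_abs]
  gcongr
  exact f.norm_coe_le_norm _

end Entropy

section EntropyConvolution

open Filter
open scoped NNReal

variable {G : Type*} [AddCommGroup G] [MeasurableSpace G] [MeasurableAdd₂ G] [MeasurableNeg G]
  {V m : Measure G} {h : G → ℝ}

theorem lintegral_lintegral_sub_mul [SFinite V] [V.IsAddLeftInvariant] (n : Measure G) [SFinite n]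
    {F f : G → ENNReal} (hF : Measurable F) (hf : Measurable f) :
    ∫⁻ y, (∫⁻ u, F (y - u) ∂n) * f y ∂V = ∫⁻ u, ∫⁻ y, F y * f (y + u) ∂V ∂n := by
  have hmul (y : G) : (∫⁻ u, F (y - u) ∂n) * f y = ∫⁻ u, F (y - u) * f y ∂n :=
    (lintegral_mul_const (f y) (f := fun u => F (y - u)) (by fun_prop)).symm
  simp only [hmul]
  rw [lintegral_lintegral_swap (by fun_prop)]
  congr 1 with u
  rw [← lintegral_sub_right_eq_self (fun y => F y * f (y + u)) u]
  simp only [sub_add_cancel]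

theorem integrable_comp_sub_of_le (n : Measure G) [IsFiniteMeasure n] {F : G → ℝ} {C : ℝ}
    (hF : Measurable F) (h0 : ∀ y, 0 ≤ F y) (hC : ∀ y, F y ≤ C) (y : G) :
    Integrable (fun u => F (y - u)) n :=
  .of_bound (C := C) (hF.comp (by fun_prop)).aestronglyMeasurable (Eventually.of_forall fun u => by
    rw [Real.norm_of_nonneg (h0 _)]; exact hC _)

namespace IsUnitDensity

theorem conv [SFinite V] [V.IsAddLeftInvariant] [SFinite m] (H : IsUnitDensity V m h)
    (n : Measure G) [IsProbabilityMeasure n] :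
    IsUnitDensity V (m ∗ n) fun y => ∫ u, h (y - u) ∂n := by
  have hmeas : Measurable fun p : G × G => h (p.1 - p.2) := H.measurable.comp (by fun_prop)
  have hint := integrable_comp_sub_of_le n H.measurable H.nonneg H.le_one
  refine ⟨hmeas.stronglyMeasurable.integral_prod_right.measurable,
    fun y => integral_nonneg fun u => H.nonneg _, fun y => ?_, ?_⟩
  · exact (integral_mono (hint y) (integrable_const 1) fun u => H.le_one _).trans_eq (by simp)
  · have hofReal (y : G) :
        ENNReal.ofReal (∫ u, h (y - u) ∂n) = ∫⁻ u, ENNReal.ofReal (h (y - u)) ∂n :=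
      ofReal_integral_eq_lintegral_ofReal (hint y) (Eventually.of_forall fun u => H.nonneg _)
    simp only [hofReal]
    refine Measure.ext_of_lintegral _ fun f hf => ?_
    rw [lintegral_withDensity_eq_lintegral_mul _ hmeas.ennreal_ofReal.lintegral_prod_right' hf]
    simp only [Pi.mul_apply]
    rw [lintegral_lintegral_sub_mul n H.measurable.ennreal_ofReal hf, Measure.lintegral_conv hf,
      lintegral_lintegral_swap (by fun_prop)]
    congr 1 with u
    exact H.lintegral_eq (f := fun x => f (x + u)) (by fun_prop)

theorem diffEntropy_le_diffEntropy_conv [SigmaFinite V] [V.IsAddLeftInvariant] [SFinite m]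
    (H : IsUnitDensity V m h) (n : Measure G) [IsProbabilityMeasure n]
    (hint : Integrable (fun y => Real.negMulLog (∫ u, h (y - u) ∂n)) V) :
    diffEntropy V m ≤ diffEntropy V (m ∗ n) := by
  have hneg (y : G) : 0 ≤ Real.negMulLog (∫ u, h (y - u) ∂n) := (H.conv n).negMulLog_nonneg y
  have hle (y : G) : Real.negMulLog (h y) ≤ 1 := by
    have h1 := negMulLog_le_sub (H.nonneg y) one_pos
    rw [Real.log_one, mul_zero] at h1
    linarith [H.nonneg y]
  have hjensen (y : G) : ∫⁻ u, ENNReal.ofReal (Real.negMulLog (h (y - u))) ∂n ≤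
      ENNReal.ofReal (Real.negMulLog (∫ u, h (y - u) ∂n)) := by
    have hy := integrable_comp_sub_of_le n H.measurable_negMulLog H.negMulLog_nonneg hle y
    rw [← ofReal_integral_eq_lintegral_ofReal hy
      (Eventually.of_forall fun u => H.negMulLog_nonneg _)]
    exact ENNReal.ofReal_le_ofReal (Real.concaveOn_negMulLog.le_map_integral
      Real.continuous_negMulLog.continuousOn isClosed_Ici
      (Eventually.of_forall fun u => H.nonneg _)
      (integrable_comp_sub_of_le n H.measurable H.nonneg H.le_one y) hy)
  have hswap := lintegral_lintegral_sub_mul (V := V) n H.measurable_negMulLog.ennreal_ofReal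
    measurable_one
  simp only [Pi.one_apply, mul_one, lintegral_const, measure_univ] at hswap
  rw [H.diffEntropy_eq, (H.conv n).diffEntropy_eq,
    integral_eq_lintegral_of_nonneg_ae (Eventually.of_forall H.negMulLog_nonneg)
      H.measurable_negMulLog.aestronglyMeasurable,
    integral_eq_lintegral_of_nonneg_ae (Eventually.of_forall hneg) hint.aestronglyMeasurable,
    ← hswap]
  exact ENNReal.toReal_mono hint.lintegral_lt_top.ne (lintegral_mono hjensen)

end IsUnitDensity

theorem conv_le_of_le [SigmaFinite V] [V.IsAddLeftInvariant] [SigmaFinite m] (hle : m ≤ V)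
    (n : Measure G) [IsProbabilityMeasure n] : m ∗ n ≤ V := by
  obtain ⟨h, H⟩ := exists_isUnitDensity_of_le hle
  exact (H.conv n).le

end EntropyConvolution

section FirstMoment

open Filter
open scoped NNReal

/-- The first absolute moment of a measure. -/
noncomputable def firstMoment {E : Type*} [ENorm E] [MeasurableSpace E] (m : Measure E) :
    ENNReal :=
  ∫⁻ y, ‖y‖ₑ ∂m

variable {E : Type*} [NormedAddCommGroup E] [MeasurableSpace E] [BorelSpace E]

theorem firstMoment_dilate [NormedSpace ℝ E] (v : ℝ) (m : Measure E) :
    firstMoment (dilate v m) = ENNReal.ofReal (Real.exp v) * firstMoment m := by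
  rw [firstMoment, lintegral_dilate v m (by fun_prop), firstMoment,
    ← lintegral_const_mul _ (by fun_prop)]
  simp only [enorm_smul, Real.enorm_of_nonneg (Real.exp_pos v).le]

variable [SecondCountableTopology E]

theorem firstMoment_conv_le (m n : Measure E) [IsProbabilityMeasure m] [IsProbabilityMeasure n] :
    firstMoment (m ∗ n) ≤ firstMoment m + firstMoment n := by
  calc firstMoment (m ∗ n) = ∫⁻ x, ∫⁻ y, ‖x + y‖ₑ ∂n ∂m := Measure.lintegral_conv (by fun_prop)
    _ ≤ ∫⁻ x, ∫⁻ y, (‖x‖ₑ + ‖y‖ₑ) ∂n ∂m := by gcongr with x y; exact enorm_add_le _ _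
    _ = firstMoment m + firstMoment n := by
        simp only [lintegral_add_left measurable_const, lintegral_const, measure_univ, mul_one,
          lintegral_add_right _ measurable_const]
        rfl

theorem firstMoment_conv_ne_top {m n : Measure E} [IsProbabilityMeasure m]
    [IsProbabilityMeasure n] (hm : firstMoment m ≠ ⊤) (hn : firstMoment n ≠ ⊤) :
    firstMoment (m ∗ n) ≠ ⊤ :=
  ne_top_of_le_ne_top (ENNReal.add_ne_top.2 ⟨hm, hn⟩) (firstMoment_conv_le m n)

theorem firstMoment_expLaw (u : ℝ) : firstMoment (expLaw u) = ENNReal.ofReal (Real.exp u) :=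
  lintegral_enorm_expLaw u

theorem firstMoment_expLaw_ne_top (u : ℝ) : firstMoment (expLaw u) ≠ ⊤ := by
  rw [firstMoment_expLaw]
  exact ENNReal.ofReal_ne_top

theorem integrable_abs_of_firstMoment {m : Measure ℝ} (hm : firstMoment m ≠ ⊤) :
    Integrable (fun y => |y|) m :=
  ⟨by fun_prop, by simpa [firstMoment, hasFiniteIntegral_iff_enorm, lt_top_iff_ne_top] using hm⟩

theorem integral_abs_eq_firstMoment (m : Measure ℝ) : ∫ y, |y| ∂m = (firstMoment m).toReal :=
  integral_norm_eq_lintegral_enorm (f := fun y : ℝ => y) (by fun_prop)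

theorem integral_exp_neg_abs : ∫ y : ℝ, Real.exp (-|y|) = 2 := by
  rw [integral_comp_abs (f := fun y => Real.exp (-y)), integral_exp_neg_Ioi_zero, mul_one]

theorem integrable_exp_neg_abs : Integrable fun y : ℝ => Real.exp (-|y|) :=
  .of_integral_ne_zero (by rw [integral_exp_neg_abs]; exact two_ne_zero)

variable {M : ℝ≥0} {m : Measure ℝ}

theorem log_exp_neg_abs_div (hM : 0 < M) (y : ℝ) :
    Real.log (Real.exp (-|y|) / (2 * M)) = -|y| - Real.log (2 * M) := by
  rw [Real.log_div (Real.exp_ne_zero _) (by positivity), Real.log_exp]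

theorem integrable_log_exp_neg_abs_div [IsFiniteMeasure m] (hM : 0 < M) (hm : firstMoment m ≠ ⊤) :
    Integrable (fun y => Real.log (Real.exp (-|y|) / (2 * M))) m := by
  simp only [log_exp_neg_abs_div hM]
  exact (integrable_abs_of_firstMoment hm).neg.sub (integrable_const _)

theorem IsUnitDensity.integrable_negMulLog_of_firstMoment [IsFiniteMeasure m] {h : ℝ → ℝ}
    (H : IsUnitDensity (M • volume) m h) (hM : 0 < M) (hm : firstMoment m ≠ ⊤) :
    Integrable (fun y => Real.negMulLog (h y)) (M • volume) :=
  H.integrable_negMulLog (p := fun y => Real.exp (-|y|) / (2 * M)) (fun y => by positivity)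
    (integrable_exp_neg_abs.smul_measure_nnreal.div_const _) (integrable_log_exp_neg_abs_div hM hm)

theorem diffEntropy_le_log_add_firstMoment [IsProbabilityMeasure m] (hM : 0 < M)
    (hle : m ≤ M • volume) (hm : firstMoment m ≠ ⊤) :
    diffEntropy (M • volume) m ≤ Real.log (2 * M) + (firstMoment m).toReal := by
  obtain ⟨h, H⟩ := exists_isUnitDensity_of_le hle
  have hp1 : ∫ y : ℝ, Real.exp (-|y|) / (2 * M) ∂(M • volume) = 1 := by
    rw [integral_div, integral_smul_nnreal_measure, integral_exp_neg_abs, NNReal.smul_def,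
      smul_eq_mul, mul_comm, div_self (by positivity)]
  refine (H.diffEntropy_le_crossEntropy (p := fun y => Real.exp (-|y|) / (2 * M))
    (fun y => by positivity)
    (integrable_exp_neg_abs.smul_measure_nnreal.div_const _)
    (integrable_log_exp_neg_abs_div hM hm)).trans_eq ?_
  simp only [hp1, log_exp_neg_abs_div hM]
  rw [integral_sub (f := fun y => -|y|) (integrable_abs_of_firstMoment hm).neg
    (integrable_const _), integral_neg, integral_abs_eq_firstMoment, integral_const, probReal_univ,
    one_smul]
  ring

end FirstMoment

section EntropyStep

open scoped NNReal

variable {M : ℝ≥0} {m n : Measure ℝ} [IsProbabilityMeasure m] [IsProbabilityMeasure n]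

theorem norm_averaging_sub_sq_le_diffEntropy (hM : 0 < M) (hm : m ≤ M • volume)
    (hn : n ≤ M • volume) (hm1 : firstMoment m ≠ ⊤) (hn1 : firstMoment n ≠ ⊤) {w w' : ℝ≥0}
    (hww' : w + w' = 1) :
    w * diffEntropy (M • volume) m + w' * diffEntropy (M • volume) n +
        w * w' * ‖averaging m - averaging n‖ ^ 2 / 2 ≤
      diffEntropy (M • volume) (w • m + w' • n) := by
  obtain ⟨h, H⟩ := exists_isUnitDensity_of_le hm
  obtain ⟨k, K⟩ := exists_isUnitDensity_of_le hn
  have hmn1 : firstMoment (w • m + w' • n) ≠ ⊤ := by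
    simp only [firstMoment, lintegral_add_measure, lintegral_smul_measure] at *
    exact ENNReal.add_ne_top.2 ⟨ENNReal.mul_ne_top ENNReal.coe_ne_top hm1,
      ENNReal.mul_ne_top ENNReal.coe_ne_top hn1⟩
  refine le_trans ?_ (H.diffEntropy_convexCombination_ge K hww'
    (H.integrable_negMulLog_of_firstMoment hM hm1) (K.integrable_negMulLog_of_firstMoment hM hn1)
    ((H.convexCombination K hww').integrable_negMulLog_of_firstMoment hM hmn1))
  gcongr
  exact norm_averaging_sub_le H K

theorem diffEntropy_le_diffEntropy_conv (hM : 0 < M) (hm : m ≤ M • volume)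
    (hm1 : firstMoment m ≠ ⊤) (hn1 : firstMoment n ≠ ⊤) :
    diffEntropy (M • volume) m ≤ diffEntropy (M • volume) (m ∗ n) := by
  obtain ⟨h, H⟩ := exists_isUnitDensity_of_le hm
  exact H.diffEntropy_le_diffEntropy_conv n
    ((H.conv n).integrable_negMulLog_of_firstMoment hM (firstMoment_conv_ne_top hm1 hn1))

theorem conv_expLaw_eq_add (m : Measure ℝ) [SFinite m] {s t : ℝ} {a b : ℝ≥0}
    (ha : a = Real.exp (s - t)) (hab : a + b = 1) :
    m ∗ expLaw t = a • (m ∗ expLaw s) + b • ((m ∗ expLaw s) ∗ expLaw t) := by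
  conv_lhs => rw [expLaw_eq_add_conv ha hab]
  simp only [ENNReal.smul_def]
  rw [Measure.conv_add, Measure.conv_smul_right, Measure.conv_smul_right, Measure.conv_assoc]

theorem norm_averaging_mul_expResolvent_sq_le (hM : 0 < M) (hm1 : firstMoment m ≠ ⊤) {s t : ℝ}
    (hst : s ≤ t) (hle : m ∗ expLaw s ≤ M • volume) :
    ‖averaging m * (expResolvent s * (1 - expResolvent t))‖ ^ 2 * (1 - Real.exp (s - t)) ≤
      2 * (diffEntropy (M • volume) (m ∗ expLaw t) -
        diffEntropy (M • volume) (m ∗ expLaw s)) := by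
  obtain ⟨a, b, ha, hab⟩ := exists_nnreal_eq_exp_of_nonpos (sub_nonpos.2 hst)
  have hb : (b : ℝ) = 1 - a := eq_sub_of_add_eq' (by exact_mod_cast hab)
  have hs1 := firstMoment_conv_ne_top hm1 (firstMoment_expLaw_ne_top s)
  have ht1 := firstMoment_conv_ne_top hm1 (firstMoment_expLaw_ne_top t)
  have hst1 := firstMoment_conv_ne_top hs1 (firstMoment_expLaw_ne_top t)
  have hconcave := norm_averaging_sub_sq_le_diffEntropy hM hle (conv_le_of_le hle (expLaw t))
    hs1 hst1 hab
  rw [← conv_expLaw_eq_add m ha hab] at hconcave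
  obtain ⟨h, H⟩ := exists_isUnitDensity_of_le hle
  have ht : m ∗ expLaw t ≤ M • volume := by
    rw [conv_expLaw_eq_add m ha hab]
    exact (H.convexCombination (H.conv (expLaw t)) hab).le
  have hmono := diffEntropy_le_diffEntropy_conv hM ht ht1 (firstMoment_expLaw_ne_top s)
  rw [Measure.conv_assoc, Measure.conv_comm (expLaw t), ← Measure.conv_assoc] at hmono
  have hdiff : averaging (m ∗ expLaw s) - averaging ((m ∗ expLaw s) ∗ expLaw t) =
      averaging m * (expResolvent s * (1 - expResolvent t)) := by
    simp only [averaging_conv, expResolvent]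
    ring
  rw [hdiff] at hconcave
  rw [← ha, ← hb]
  have ha0 : (0 : ℝ) < a := ha ▸ Real.exp_pos _
  refine le_of_mul_le_mul_left ?_ ha0
  linear_combination 2 * hconcave + 2 * b * hmono - 2 * diffEntropy (M • volume) (m ∗ expLaw t) * hb

theorem norm_expTransition_mul_averaging_le (m : Measure ℝ) [IsFiniteMeasure m] {s t : ℝ}
    (hst : s ≤ t) : ‖expTransition t * averaging m‖ ≤
      ‖averaging m * (expResolvent s * (1 - expResolvent t))‖ := by
  obtain ⟨a, b, ha, hab⟩ := exists_nnreal_eq_exp_of_nonpos (sub_nonpos.2 hst)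
  have hfactor : expTransition t * averaging m =
      averaging m * (expResolvent s * (1 - expResolvent t)) *
        ((a : ℝ) • 1 + (b : ℝ) • expResolvent t) := by
    rw [expTransition]
    nth_rw 1 [expResolvent_eq_add ha hab]
    simp only [Algebra.smul_def]
    ring
  have hnorm : ‖(a : ℝ) • (1 : averagingAlgebra ℝ) + (b : ℝ) • expResolvent t‖ ≤ 1 := by
    calc _ ≤ (a : ℝ) * 1 + b * 1 := by
          refine (norm_add_le _ _).trans ?_
          rw [norm_smul, norm_smul, norm_one, Real.norm_of_nonneg a.coe_nonneg,
            Real.norm_of_nonneg b.coe_nonneg]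
          gcongr
          exact norm_expResolvent_le_one t
      _ = 1 := by rw [mul_one, mul_one]; exact_mod_cast hab
  rw [hfactor]
  exact (norm_mul_le _ _).trans (mul_le_of_le_one_right (norm_nonneg _) hnorm)

theorem sum_norm_expTransition_sq_le {u ℓ : ℝ} (hM : 0 < M) (hm1 : firstMoment m ≠ ⊤)
    (hℓ : 0 ≤ ℓ) (hle : ∀ v, u ≤ v → m ∗ expLaw v ≤ M • volume) (L : ℕ) :
    (∑ a ∈ Finset.range L, ‖expTransition (u + (a + 1) * ℓ) * averaging m‖ ^ 2) *
        (1 - Real.exp (-ℓ)) ≤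
      2 * (Real.log (2 * M) + (firstMoment m).toReal + Real.exp (u + L * ℓ)) := by
  set Φ : ℕ → ℝ := fun a => diffEntropy (M • volume) (m ∗ expLaw (u + a * ℓ)) with hΦ
  have hstep (a : ℕ) : ‖expTransition (u + (a + 1) * ℓ) * averaging m‖ ^ 2 *
      (1 - Real.exp (-ℓ)) ≤ 2 * (Φ (a + 1) - Φ a) := by
    have hst : u + a * ℓ ≤ u + (a + 1) * ℓ := by linarith
    have h := norm_averaging_mul_expResolvent_sq_le hM hm1 hst
      (hle _ (le_add_of_nonneg_right (by positivity)))
    rw [show u + a * ℓ - (u + (a + 1) * ℓ) = -ℓ by ring] at h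
    simp only [hΦ, Nat.cast_add, Nat.cast_one]
    refine le_trans ?_ h
    have hexp : 0 ≤ 1 - Real.exp (-ℓ) := sub_nonneg.2 (Real.exp_le_one_iff.2 (by linarith))
    gcongr
    exact norm_expTransition_mul_averaging_le m hst
  have hΦ0 : 0 ≤ Φ 0 := by
    obtain ⟨h, H⟩ := exists_isUnitDensity_of_le (hle (u + (0 : ℕ) * ℓ) (by simp))
    exact H.diffEntropy_nonneg
  have hΦL : Φ L ≤ Real.log (2 * M) + (firstMoment m).toReal + Real.exp (u + L * ℓ) := by
    have hE1 := firstMoment_expLaw_ne_top (u + L * ℓ)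
    refine (diffEntropy_le_log_add_firstMoment hM
      (hle _ (le_add_of_nonneg_right (by positivity))) (firstMoment_conv_ne_top hm1 hE1)).trans ?_
    rw [add_assoc, ← ENNReal.toReal_ofReal (Real.exp_pos (u + L * ℓ)).le, ← firstMoment_expLaw,
      ← ENNReal.toReal_add hm1 hE1]
    gcongr
    · exact ENNReal.add_ne_top.2 ⟨hm1, hE1⟩
    · exact firstMoment_conv_le _ _
  calc _ ≤ ∑ a ∈ Finset.range L, 2 * (Φ (a + 1) - Φ a) := by
        rw [Finset.sum_mul]
        exact Finset.sum_le_sum fun a _ => hstep a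
    _ ≤ _ := by rw [← Finset.mul_sum, Finset.sum_range_sub]; linarith

end EntropyStep

section SelfSimilar

variable {E : Type*} [NormedAddCommGroup E] [NormedSpace ℝ E] [MeasurableSpace E]

/-- `m` is self-similar with contraction ratio `exp (-ℓ)` and law of translations `D`: it is the law
of `∑ j, exp (-j * ℓ) • X j` for independent `X j` with law `D`. -/
def IsSelfSimilar (ℓ : ℝ) (D m : Measure E) : Prop :=
  m = D ∗ dilate (-ℓ) m

/-- The law of `∑ j < J, exp (-j * ℓ) • X j` for independent `X j` with law `D`. -/
noncomputable def partialSum (ℓ : ℝ) (D : Measure E) : ℕ → Measure E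
  | 0 => Measure.dirac 0
  | J + 1 => D ∗ dilate (-ℓ) (partialSum ℓ D J)

variable [BorelSpace E] [SecondCountableTopology E] {ℓ : ℝ} {D m : Measure E}
  [IsProbabilityMeasure D]

instance (J : ℕ) : IsProbabilityMeasure (partialSum ℓ D J) := by
  induction J with
  | zero => exact Measure.dirac.isProbabilityMeasure
  | succ J ih => rw [partialSum]; infer_instance

theorem IsSelfSimilar.eq_partialSum_conv [IsProbabilityMeasure m] (h : IsSelfSimilar ℓ D m)
    (J : ℕ) : m = partialSum ℓ D J ∗ dilate (-(J * ℓ)) m := by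
  induction J with
  | zero => simp [partialSum, dilate_zero]
  | succ J ih =>
    calc m = D ∗ dilate (-ℓ) m := h
      _ = D ∗ dilate (-ℓ) (partialSum ℓ D J ∗ dilate (-(J * ℓ)) m) := by rw [← ih]
      _ = partialSum ℓ D (J + 1) ∗ dilate (-((J + 1 : ℕ) * ℓ)) m := by
        rw [dilate_conv, dilate_dilate, partialSum, Measure.conv_assoc]
        congr 3
        push_cast
        ring

theorem firstMoment_partialSum_le {K : ℝ} (hℓ : 0 ≤ ℓ) (hK : 0 ≤ K)
    (hD : firstMoment D ≤ ENNReal.ofReal ((1 - Real.exp (-ℓ)) * K)) (J : ℕ) :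
    firstMoment (partialSum ℓ D J) ≤ ENNReal.ofReal K := by
  induction J with
  | zero => simp [partialSum, firstMoment]
  | succ J ih =>
    have hexp : Real.exp (-ℓ) ≤ 1 := Real.exp_le_one_iff.2 (neg_nonpos.2 hℓ)
    calc firstMoment (partialSum ℓ D (J + 1))
        ≤ firstMoment D + ENNReal.ofReal (Real.exp (-ℓ)) * firstMoment (partialSum ℓ D J) := by
          rw [← firstMoment_dilate]
          exact firstMoment_conv_le _ _
      _ ≤ ENNReal.ofReal ((1 - Real.exp (-ℓ)) * K) +
          ENNReal.ofReal (Real.exp (-ℓ)) * ENNReal.ofReal K := by gcongr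
      _ = ENNReal.ofReal K := by
          rw [← ENNReal.ofReal_mul (Real.exp_pos _).le, ← ENNReal.ofReal_add
            (mul_nonneg (sub_nonneg.2 hexp) hK) (by positivity)]
          ring_nf

end SelfSimilar

section Blocks

theorem sum_range_mul_eq_sum_sum (f : ℕ → ℝ) (n J : ℕ) :
    ∑ a ∈ Finset.range (n * J), f a =
      ∑ o ∈ Finset.range J, ∑ i ∈ Finset.range n, f (o + i * J) := by
  rw [Finset.sum_comm]
  induction n with
  | zero => simp
  | succ n ih =>
    rw [Nat.succ_mul, Finset.sum_range_add, ih, Finset.sum_range_succ]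
    simp only [add_comm (n * J)]

theorem prod_sq_le_of_sum_sq_le {n : ℕ} {b : ℕ → ℝ} {S : ℝ}
    (hS : ∑ i ∈ Finset.range n, b i ^ 2 ≤ S) :
    (∏ i ∈ Finset.range n, b i) ^ 2 ≤ (S / n) ^ n := by
  rcases n.eq_zero_or_pos with rfl | hn
  · simp
  have : (n : ℝ) ≠ 0 := by positivity
  have hprod : 0 ≤ ∏ i ∈ Finset.range n, b i ^ 2 := Finset.prod_nonneg fun i _ => sq_nonneg _
  have hmean := Real.geom_mean_le_arith_mean (Finset.range n) (fun _ => 1) (fun i => b i ^ 2)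
    (fun _ _ => zero_le_one) (by simpa using hn) (fun i _ => sq_nonneg _)
  simp only [Real.rpow_one, one_mul, Finset.sum_const, Finset.card_range, nsmul_eq_mul,
    mul_one] at hmean
  calc (∏ i ∈ Finset.range n, b i) ^ 2 = ((∏ i ∈ Finset.range n, b i ^ 2) ^ (n : ℝ)⁻¹) ^ n := by
        rw [Real.rpow_inv_natCast_pow hprod hn.ne', Finset.prod_pow]
    _ ≤ (S / n) ^ n := by
        gcongr
        exact hmean.trans (by gcongr)

variable {ℓ : ℝ} {D m : Measure ℝ} [IsProbabilityMeasure D] [IsProbabilityMeasure m]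

theorem IsSelfSimilar.norm_expTransition_pow_succ_le (h : IsSelfSimilar ℓ D m) (J : ℕ)
    (u v : ℝ) (k : ℕ) :
    ‖expTransition u ^ (k + 1) * averaging (dilate (-v) m)‖ ≤
      ‖expTransition (u + v) * averaging (partialSum ℓ D J)‖ *
        ‖expTransition u ^ k * averaging (dilate (-(v + J * ℓ)) m)‖ := by
  have hm : dilate (-v) m = dilate (-v) (partialSum ℓ D J) ∗ dilate (-(v + J * ℓ)) m := by
    conv_lhs => rw [h.eq_partialSum_conv J]
    rw [dilate_conv, dilate_dilate, neg_add]
  have hscale := norm_expTransition_pow_mul_averaging_dilate_le (-v) u 1 (partialSum ℓ D J)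
  rw [pow_one, pow_one, sub_neg_eq_add] at hscale
  calc ‖expTransition u ^ (k + 1) * averaging (dilate (-v) m)‖
      = ‖(expTransition u * averaging (dilate (-v) (partialSum ℓ D J))) *
          (expTransition u ^ k * averaging (dilate (-(v + J * ℓ)) m))‖ := by
        simp only [hm, averaging_conv]
        ring_nf
    _ ≤ _ := (norm_mul_le _ _).trans (by gcongr)

theorem IsSelfSimilar.norm_expTransition_pow_add_le_prod (h : IsSelfSimilar ℓ D m) (J : ℕ)
    (u v : ℝ) (n k : ℕ) :
    ‖expTransition u ^ (n + k) * averaging (dilate (-v) m)‖ ≤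
      (∏ i ∈ Finset.range n,
        ‖expTransition (u + (v + i * (J * ℓ))) * averaging (partialSum ℓ D J)‖) *
        ‖expTransition u ^ k * averaging (dilate (-(v + n * (J * ℓ))) m)‖ := by
  induction n generalizing k with
  | zero => simp
  | succ n ih =>
    have hstep := h.norm_expTransition_pow_succ_le J u (v + n * (J * ℓ)) k
    rw [show v + n * (J * ℓ) + J * ℓ = v + (n + 1 : ℕ) * (J * ℓ) by push_cast; ring] at hstep
    rw [add_right_comm, add_assoc, Finset.prod_range_succ, mul_assoc]
    exact (ih (k + 1)).trans (by gcongr)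

/-- Pigeonhole over the offsets `o < J`: for one of them the factors met along
`o, o + J, …, o + (n - 1) * J` have a small sum of squares. -/
theorem IsSelfSimilar.exists_norm_expTransition_pow_add_le (h : IsSelfSimilar ℓ D m) {J n : ℕ}
    (hJ : 0 < J) {u S θ : ℝ} (hθ : 0 ≤ θ) (hSθ : (S / n) ^ n ≤ θ ^ 2)
    (hS : ∑ a ∈ Finset.range (n * J),
      ‖expTransition (u + a * ℓ) * averaging (partialSum ℓ D J)‖ ^ 2 ≤ J * S) :
    ∃ N ≤ (n + 1) * J, ∀ k, ‖expTransition u ^ (n + k) * averaging m‖ ≤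
      θ * ‖expTransition (u + N * ℓ) ^ k * averaging m‖ := by
  rw [sum_range_mul_eq_sum_sum] at hS
  obtain ⟨o, ho, hoS⟩ := Finset.exists_le_of_sum_le (Finset.nonempty_range_iff.2 hJ.ne')
    (hS.trans_eq (by simp : (J : ℝ) * S = ∑ o ∈ Finset.range J, S))
  refine ⟨o + n * J, by linarith [Finset.mem_range.1 ho], fun k => ?_⟩
  have hprod : ∏ i ∈ Finset.range n,
      ‖expTransition (u + (o * ℓ + i * (J * ℓ))) * averaging (partialSum ℓ D J)‖ ≤ θ := by
    refine (le_abs_self _).trans (abs_le_of_sq_le_sq ((prod_sq_le_of_sum_sq_le ?_).trans hSθ) hθ)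
    simpa only [Nat.cast_add, Nat.cast_mul, add_mul, mul_assoc] using hoS
  have hscale := norm_expTransition_pow_mul_averaging_dilate_le (-(o * ℓ + n * (J * ℓ))) u k m
  rw [show u - -(o * ℓ + n * (J * ℓ)) = u + (o + n * J : ℕ) * ℓ by push_cast; ring] at hscale
  calc ‖expTransition u ^ (n + k) * averaging m‖
      = ‖averaging (partialSum ℓ D o) *
          (expTransition u ^ (n + k) * averaging (dilate (-(o * ℓ)) m))‖ := by
        rw [mul_left_comm, ← averaging_conv]
        simp only [← h.eq_partialSum_conv o]
    _ ≤ ‖expTransition u ^ (n + k) * averaging (dilate (-(o * ℓ)) m)‖ :=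
        (norm_mul_le _ _).trans (mul_le_of_le_one_left (norm_nonneg _) (norm_averaging_le_one _))
    _ ≤ _ := h.norm_expTransition_pow_add_le_prod J u (o * ℓ) n k
    _ ≤ _ := by gcongr

end Blocks

section Criterion

theorem exists_forall_exists_nat_mul_le {p Q r δ ℓ : ℝ} (hQ : 0 < Q) (hp : 0 ≤ p)
    (hpQ : p < r * Q) (hδ : 0 < δ) (hℓ : 0 ≤ ℓ) (C : ℝ) :
    ∃ x₀, 0 ≤ x₀ ∧ ∀ x, x₀ ≤ x →
      ∃ J : ℕ, 0 < J ∧ x + ℓ ≤ J * Q ∧ C ≤ J * δ ∧ J * p ≤ r * x := by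
  have hgap : 0 < r * Q - p := sub_pos.2 hpQ
  refine ⟨max 1 (max (C * Q / δ) (p * (ℓ + Q) / (r * Q - p))), by positivity, fun x hx => ?_⟩
  obtain ⟨hx1, hxC, hxp⟩ : 1 ≤ x ∧ C * Q ≤ x * δ ∧ p * (ℓ + Q) ≤ x * (r * Q - p) := by
    simpa only [max_le_iff, div_le_iff₀ hδ, div_le_iff₀ hgap] using hx
  set J := ⌈(x + ℓ) / Q⌉₊
  have hJ_ge : x + ℓ ≤ J * Q := (div_le_iff₀ hQ).1 (Nat.le_ceil _)
  have hJ_le : J * Q ≤ x + ℓ + Q := by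
    have h := Nat.ceil_lt_add_one (a := (x + ℓ) / Q) (by positivity)
    rw [div_add_one hQ.ne', lt_div_iff₀ hQ] at h
    exact h.le
  refine ⟨J, Nat.ceil_pos.2 (by positivity), hJ_ge, ?_, ?_⟩
  · refine le_of_mul_le_mul_right ?_ hQ
    calc C * Q ≤ x * δ := hxC
      _ ≤ J * Q * δ := by gcongr; linarith
      _ = J * δ * Q := by ring
  · refine le_of_mul_le_mul_right ?_ hQ
    calc J * p * Q = p * (J * Q) := by ring
      _ ≤ p * (x + ℓ + Q) := by gcongr
      _ ≤ r * x * Q := by linarith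

theorem norm_pow_mul_le_pow_of_jump {A : Type*} [NormedRing A] {y : ℝ → A} {m : A} (hm : ‖m‖ ≤ 1)
    {n : ℕ} {κ θ x₀ : ℝ} (hκ : 1 ≤ κ) (hθ : 0 ≤ θ) (hx₀ : 0 ≤ x₀)
    (hjump : ∀ u ≤ -x₀, ∃ u' ≤ u / κ, ∀ k, ‖y u ^ (n + k) * m‖ ≤ θ * ‖y u' ^ k * m‖) (B : ℕ)
    (u : ℝ) (hu : u ≤ -(x₀ * κ ^ B)) : ‖y u ^ (n * B) * m‖ ≤ θ ^ B := by
  induction B generalizing u with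
  | zero => simpa using hm
  | succ B ih =>
    have hκ0 : 0 < κ := by linarith
    obtain ⟨u', hu', hk⟩ := hjump u
      (hu.trans (neg_le_neg (le_mul_of_one_le_right hx₀ (one_le_pow₀ hκ))))
    have hu'B : u' ≤ -(x₀ * κ ^ B) := by
      refine hu'.trans ((div_le_iff₀ hκ0).2 (hu.trans_eq ?_))
      ring
    calc ‖y u ^ (n * (B + 1)) * m‖ = ‖y u ^ (n + n * B) * m‖ := by ring_nf
      _ ≤ θ * ‖y u' ^ (n * B) * m‖ := hk (n * B)
      _ ≤ θ * θ ^ B := by gcongr; exact ih u' hu'B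
      _ = θ ^ (B + 1) := (pow_succ' θ B).symm

variable {ℓ c K Q S θ κ : ℝ} {n : ℕ} {D m : Measure ℝ} [IsProbabilityMeasure D]

theorem sum_norm_expTransition_partialSum_sq_le {u : ℝ} {J L : ℕ} (hc : 0 < c) (hℓ : 0 ≤ ℓ)
    (hK0 : 0 ≤ K) (hK : firstMoment (partialSum ℓ D J) ≤ ENNReal.ofReal K)
    (hle : ∀ v, u - ℓ ≤ v →
      partialSum ℓ D J ∗ expLaw v ≤ (c * Real.exp (J * ℓ)).toNNReal • volume)
    (hL : u + L * ℓ ≤ ℓ) :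
    (∑ a ∈ Finset.range L, ‖expTransition (u + a * ℓ) * averaging (partialSum ℓ D J)‖ ^ 2) *
        (1 - Real.exp (-ℓ)) ≤ 2 * (J * ℓ + (Real.log (2 * c) + K + 1)) := by
  have hM : 0 < c * Real.exp (J * ℓ) := by positivity
  have h := sum_norm_expTransition_sq_le (Real.toNNReal_pos.2 hM)
    (ne_top_of_le_ne_top ENNReal.ofReal_ne_top hK) hℓ hle L
  have hindex (a : ℕ) : u - ℓ + (a + 1) * ℓ = u + a * ℓ := by ring
  simp only [hindex] at h
  have hlog : Real.log (2 * (c * Real.exp (J * ℓ)).toNNReal) = Real.log (2 * c) + J * ℓ := by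
    rw [Real.coe_toNNReal _ hM.le, ← mul_assoc, Real.log_mul (by positivity) (Real.exp_ne_zero _),
      Real.log_exp]
  have hmoment := ENNReal.toReal_le_of_le_ofReal hK0 hK
  have hexp : Real.exp (u - ℓ + L * ℓ) ≤ 1 := Real.exp_le_one_iff.2 (by linarith)
  linarith

variable [IsProbabilityMeasure m]

/-- Take `J ≈ -u / Q`, the fewest digits with a bounded density at scale `exp u`. -/
theorem IsSelfSimilar.exists_jump (h : IsSelfSimilar ℓ D m) (hℓ : 0 < ℓ) (hD : firstMoment D ≠ ⊤)
    (hc : 0 < c) (hQ : 0 < Q)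
    (hdens : ∀ (J : ℕ) (v : ℝ), -(J * Q) ≤ v →
      partialSum ℓ D J ∗ expLaw v ≤ (c * Real.exp (J * ℓ)).toNNReal • volume)
    (hS : 2 * ℓ < S * (1 - Real.exp (-ℓ))) (hθ : 0 ≤ θ) (hSθ : (S / n) ^ n ≤ θ ^ 2)
    (hκ : 0 ≤ κ) (hnQ : (n + 1) * ℓ < (1 - κ⁻¹) * Q) :
    ∃ x₀, 0 ≤ x₀ ∧ ∀ u ≤ -x₀, ∃ u' ≤ u / κ, ∀ k,
      ‖expTransition u ^ (n + k) * averaging m‖ ≤ θ * ‖expTransition u' ^ k * averaging m‖ := by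
  have hexp : 0 < 1 - Real.exp (-ℓ) := sub_pos.2 (Real.exp_lt_one_iff.2 (neg_lt_zero.2 hℓ))
  set K := (firstMoment D).toReal / (1 - Real.exp (-ℓ)) with hK
  have hK0 : 0 ≤ K := by positivity
  have hDK : firstMoment D ≤ ENNReal.ofReal ((1 - Real.exp (-ℓ)) * K) := by
    rw [hK, mul_div_cancel₀ _ hexp.ne', ENNReal.ofReal_toReal hD]
  obtain ⟨x₀, hx₀, hJ⟩ := exists_forall_exists_nat_mul_le hQ (by positivity) hnQ (sub_pos.2 hS)
    hℓ.le (2 * (Real.log (2 * c) + K + 1))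
  refine ⟨x₀, hx₀, fun u hu => ?_⟩
  obtain ⟨J, hJ0, hJQ, hJC, hJn⟩ := hJ (-u) (le_neg.1 hu)
  have hu' : u + (n + 1) * J * ℓ ≤ u / κ := by
    rw [div_eq_inv_mul]
    linarith
  have huκ : u / κ ≤ 0 := div_nonpos_of_nonpos_of_nonneg (by linarith) hκ
  have hnJ : u + (n * J : ℕ) * ℓ ≤ ℓ := by
    push_cast
    nlinarith [mul_nonneg J.cast_nonneg hℓ.le]
  have hsum := sum_norm_expTransition_partialSum_sq_le (L := n * J) (u := u) hc hℓ.le hK0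
    (firstMoment_partialSum_le hℓ.le hK0 hDK J) (fun v hv => hdens J v (by linarith)) hnJ
  obtain ⟨N, hN, hk⟩ := h.exists_norm_expTransition_pow_add_le (n := n) (u := u) (S := S) hJ0 hθ hSθ
    (le_of_mul_le_mul_right (hsum.trans (by linarith)) hexp)
  refine ⟨u + N * ℓ, le_trans ?_ hu', hk⟩
  gcongr
  exact_mod_cast hN

theorem IsSelfSimilar.absolutelyContinuous (h : IsSelfSimilar ℓ D m) (hℓ : 0 < ℓ)
    (hD : firstMoment D ≠ ⊤) (hc : 0 < c) (hQ : 0 < Q)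
    (hdens : ∀ (J : ℕ) (v : ℝ), -(J * Q) ≤ v →
      partialSum ℓ D J ∗ expLaw v ≤ (c * Real.exp (J * ℓ)).toNNReal • volume)
    (hS : 2 * ℓ < S * (1 - Real.exp (-ℓ))) (hθ : 0 < θ) (hn : 1 ≤ n) (hSθ : (S / n) ^ n ≤ θ ^ 2)
    (hnQ : (n + 1) * ℓ < (1 - κ⁻¹) * Q) (hκ : 1 < κ) (hκθ : κ * (4 ^ n * θ) < 1) : m ≪ volume := by
  obtain ⟨x₀, hx₀, hjump⟩ := h.exists_jump hℓ hD hc hQ hdens hS hθ.le hSθ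
    (zero_le_one.trans hκ.le) hnQ
  obtain ⟨x, hx, hcauchy⟩ := isLogistic_expResolvent.exists_cauchySeq_of_decay
    norm_expResolvent_le_one (averaging m) hn hκ hθ hκθ x₀
    (norm_pow_mul_le_pow_of_jump (norm_averaging_le_one m) hκ.le hθ.le hx₀ hjump)
  exact absolutelyContinuous_of_cauchySeq hx hcauchy

end Criterion

section LatticeDensity

open scoped ENNReal NNReal

theorem conv_withDensity_le {G : Type*} [AddCommGroup G] [MeasurableSpace G] [MeasurableAdd₂ G]
    [MeasurableNeg G] {V m : Measure G} [SFinite V] [V.IsAddLeftInvariant] [SFinite m]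
    {g : G → ℝ≥0∞} (hg : Measurable g) {C : ℝ≥0} (hC : ∀ z, ∫⁻ x, g (z - x) ∂m ≤ C) :
    m ∗ V.withDensity g ≤ C • V := by
  refine Measure.le_iff.2 fun A hA => ?_
  have hA1 : Measurable (A.indicator (1 : G → ℝ≥0∞)) := measurable_one.indicator hA
  calc (m ∗ V.withDensity g) A
      = ∫⁻ x, ∫⁻ y, A.indicator 1 (x + y) ∂V.withDensity g ∂m := by
        rw [← lintegral_indicator_one hA, Measure.lintegral_conv hA1]
    _ = ∫⁻ x, ∫⁻ y, g y * A.indicator 1 (y + x) ∂V ∂m := by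
        refine lintegral_congr fun x => ?_
        refine (lintegral_withDensity_eq_lintegral_mul _ hg
          (hA1.comp (measurable_const_add x))).trans ?_
        simp only [Pi.mul_apply, add_comm x, Function.comp_apply]
    _ = ∫⁻ z, (∫⁻ x, g (z - x) ∂m) * A.indicator 1 z ∂V :=
        (lintegral_lintegral_sub_mul m hg hA1).symm
    _ ≤ ∫⁻ z, C * A.indicator 1 z ∂V := by gcongr with z; exact hC z
    _ = (C • V) A := by rw [lintegral_const_mul _ hA1, lintegral_indicator_one hA]; rfl

theorem inv_one_sub_exp_neg_le {x : ℝ} (hx : 0 < x) : (1 - Real.exp (-x))⁻¹ ≤ 1 + 1 / x := by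
  have hexp : Real.exp (-x) ≤ (x + 1)⁻¹ := by
    rw [Real.exp_neg]
    exact inv_anti₀ (by positivity) (Real.add_one_le_exp x)
  calc (1 - Real.exp (-x))⁻¹ ≤ (1 - (x + 1)⁻¹)⁻¹ :=
        inv_anti₀ (sub_pos.2 (inv_lt_one_of_one_lt₀ (by linarith))) (by linarith)
    _ = 1 + 1 / x := by
        have hsub : 1 - (x + 1)⁻¹ = x / (x + 1) := by field_simp; ring
        rw [hsub, inv_div, add_div, div_self hx.ne']

/-- Only the terms `k = ⌊z / h⌋ - n` with `n : ℕ` are nonzero, and they are at most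
`r * exp (-r * h) ^ n`. -/
theorem tsum_exponentialPDF_sub_mul_le {r h : ℝ} (hr : 0 < r) (hh : 0 < h) (z : ℝ) :
    ∑' k : ℤ, ProbabilityTheory.exponentialPDF r (z - h * k) ≤ ENNReal.ofReal (r + 1 / h) := by
  have hinj : Function.Injective fun n : ℕ => ⌊z / h⌋ - (n : ℤ) := fun a b hab => by
    simpa using hab
  have hsupp : (Function.support fun k : ℤ => ProbabilityTheory.exponentialPDF r (z - h * k)) ⊆
      Set.range fun n : ℕ => ⌊z / h⌋ - (n : ℤ) := by
    intro k hk
    have hkz : h * k ≤ z := by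
      by_contra! hlt
      exact hk (ProbabilityTheory.exponentialPDF_of_neg (sub_neg.2 hlt))
    have hk0 : k ≤ ⌊z / h⌋ := Int.le_floor.2 ((le_div_iff₀' hh).2 hkz)
    exact ⟨(⌊z / h⌋ - k).toNat, by simp only; omega⟩
  have hterm (n : ℕ) :
      ProbabilityTheory.exponentialPDF r (z - h * ((⌊z / h⌋ - (n : ℤ) : ℤ) : ℝ)) ≤
        ENNReal.ofReal (r * Real.exp (-(r * h)) ^ n) := by
    have hfloor : h * ⌊z / h⌋ ≤ z := (le_div_iff₀' hh).1 (Int.floor_le _)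
    have hn : h * n ≤ z - h * ((⌊z / h⌋ - (n : ℤ) : ℤ) : ℝ) := by
      push_cast
      linarith
    rw [ProbabilityTheory.exponentialPDF_of_nonneg ((by positivity : 0 ≤ h * n).trans hn),
      ← Real.exp_nat_mul]
    gcongr
    nlinarith
  have hexp : Real.exp (-(r * h)) < 1 := Real.exp_lt_one_iff.2 (neg_lt_zero.2 (by positivity))
  have hgeom := (hasSum_geometric_of_lt_one (Real.exp_nonneg _) hexp).mul_left r
  calc ∑' k : ℤ, ProbabilityTheory.exponentialPDF r (z - h * k)
      = ∑' n : ℕ, ProbabilityTheory.exponentialPDF r (z - h * ((⌊z / h⌋ - (n : ℤ) : ℤ) : ℝ)) :=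
        (hinj.tsum_eq hsupp).symm
    _ ≤ ∑' n : ℕ, ENNReal.ofReal (r * Real.exp (-(r * h)) ^ n) := ENNReal.tsum_le_tsum hterm
    _ = ENNReal.ofReal (r * (1 - Real.exp (-(r * h)))⁻¹) := by
        rw [← ENNReal.ofReal_tsum_of_nonneg (fun n => by positivity) hgeom.summable, hgeom.tsum_eq]
    _ ≤ ENNReal.ofReal (r * (1 + 1 / (r * h))) := by
        gcongr
        exact inv_one_sub_exp_neg_le (by positivity)
    _ = ENNReal.ofReal (r + 1 / h) := by
        congr 1
        field_simp

end LatticeDensity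

section UniformDigits

open scoped ENNReal NNReal

/-- The uniform distribution on the digits `1, …, p`. -/
noncomputable def uniformDigits (p : ℕ) : Measure ℝ :=
  ∑ i : Fin p, (p : ℝ≥0∞)⁻¹ • Measure.dirac ((i : ℕ) + 1 : ℝ)

theorem lintegral_uniformDigits (p : ℕ) {f : ℝ → ℝ≥0∞} (hf : Measurable f) :
    ∫⁻ y, f y ∂uniformDigits p = (p : ℝ≥0∞)⁻¹ * ∑ i : Fin p, f ((i : ℕ) + 1) := by
  simp only [uniformDigits, lintegral_finsetSum_measure, lintegral_smul_measure,
    lintegral_dirac' _ hf, smul_eq_mul, Finset.mul_sum]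

instance (p : ℕ) [NeZero p] : IsProbabilityMeasure (uniformDigits p) where
  measure_univ := by
    rw [← lintegral_one, lintegral_uniformDigits p measurable_const]
    simpa using ENNReal.inv_mul_cancel (NeZero.ne (p : ℝ≥0∞)) (ENNReal.natCast_ne_top p)

theorem firstMoment_uniformDigits_ne_top (p : ℕ) [NeZero p] :
    firstMoment (uniformDigits p) ≠ ⊤ := by
  rw [firstMoment, lintegral_uniformDigits p (by fun_prop)]
  exact ENNReal.mul_ne_top (ENNReal.inv_ne_top.2 (NeZero.ne (p : ℝ≥0∞)))
    (ENNReal.sum_ne_top.2 fun i _ => enorm_ne_top)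

theorem lintegral_uniformDigits_conv_dilate (p : ℕ) (ℓ : ℝ) (m : Measure ℝ) [SFinite m]
    {f : ℝ → ℝ≥0∞} (hf : Measurable f) :
    ∫⁻ y, f y ∂(uniformDigits p ∗ dilate (-ℓ) m) =
      (p : ℝ≥0∞)⁻¹ * ∑ i : Fin p, ∫⁻ y, f ((i : ℕ) + 1 + Real.exp (-ℓ) * y) ∂m := by
  have : SFinite (dilate (-ℓ) m) := by unfold dilate; infer_instance
  calc ∫⁻ y, f y ∂(uniformDigits p ∗ dilate (-ℓ) m)
      = ∫⁻ x, ∫⁻ y, f (x + y) ∂dilate (-ℓ) m ∂uniformDigits p := Measure.lintegral_conv hf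
    _ = (p : ℝ≥0∞)⁻¹ * ∑ i : Fin p, ∫⁻ y, f ((i : ℕ) + 1 + y) ∂dilate (-ℓ) m :=
        lintegral_uniformDigits p (hf.comp measurable_add).lintegral_prod_right'
    _ = _ := by
        congr! 2 with i
        exact lintegral_dilate (-ℓ) m (hf.comp (measurable_const_add _))

variable {p q : ℕ}

theorem injective_pow_mul_digit_add (hpq : p.Coprime q) (hp : p ≠ 0) (J : ℕ) :
    Function.Injective fun a : Fin p × ℤ => (q : ℤ) ^ J * ((a.1 : ℕ) + 1) + p * a.2 := by
  rintro ⟨i, k⟩ ⟨i', k'⟩ heq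
  have hdvd : (p : ℤ) ∣ (q : ℤ) ^ J * ((i : ℕ) - (i' : ℕ)) := ⟨k' - k, by linear_combination heq⟩
  have hdigit : ((i : ℕ) - (i' : ℕ) : ℤ) = 0 :=
    Int.eq_zero_of_abs_lt_dvd ((Nat.isCoprime_iff_coprime.2 hpq).pow_right.dvd_of_dvd_mul_left hdvd)
      (by rw [abs_lt]; omega)
  obtain rfl : i = i' := Fin.ext (by omega)
  simpa [hp] using heq

theorem lintegral_partialSum_uniformDigits_le [NeZero p] (hpq : p.Coprime q) (hq : 0 < q) {ℓ : ℝ}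
    (hℓ : Real.exp (-ℓ) = p / q) (J : ℕ) {f : ℝ → ℝ≥0∞} (hf : Measurable f) :
    ∫⁻ y, f y ∂partialSum ℓ (uniformDigits p) J ≤
      (p : ℝ≥0∞)⁻¹ ^ J * ∑' k : ℤ, f (q / q ^ J * k) := by
  induction J generalizing f with
  | zero =>
    rw [partialSum, lintegral_dirac' _ hf, pow_zero, one_mul]
    exact (by simp : f 0 = f (q / q ^ 0 * (0 : ℤ))).trans_le (ENNReal.le_tsum _)
  | succ J ih =>
    have hq' : (q : ℝ) ≠ 0 := by positivity
    have hpoint (i : Fin p) (k : ℤ) : ((i : ℕ) + 1 : ℝ) + p / q * (q / q ^ J * k) =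
        q / q ^ (J + 1) * (((q : ℤ) ^ J * ((i : ℕ) + 1) + p * k : ℤ) : ℝ) := by
      push_cast
      field_simp
      ring
    calc ∫⁻ y, f y ∂partialSum ℓ (uniformDigits p) (J + 1)
        = (p : ℝ≥0∞)⁻¹ * ∑ i : Fin p,
            ∫⁻ y, f ((i : ℕ) + 1 + p / q * y) ∂partialSum ℓ (uniformDigits p) J := by
          rw [partialSum, lintegral_uniformDigits_conv_dilate p ℓ _ hf, hℓ]
      _ ≤ (p : ℝ≥0∞)⁻¹ * ∑ i : Fin p,
            (p : ℝ≥0∞)⁻¹ ^ J * ∑' k : ℤ, f ((i : ℕ) + 1 + p / q * (q / q ^ J * k)) := by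
          gcongr with i
          exact ih (by fun_prop)
      _ = (p : ℝ≥0∞)⁻¹ ^ (J + 1) * ∑' a : Fin p × ℤ,
            f (q / q ^ (J + 1) * (((q : ℤ) ^ J * ((a.1 : ℕ) + 1) + p * a.2 : ℤ) : ℝ)) := by
          simp only [hpoint]
          rw [← Finset.mul_sum, ← mul_assoc, ← pow_succ', ENNReal.tsum_prod', tsum_fintype]
      _ ≤ _ := by
          gcongr
          exact ENNReal.tsum_comp_le_tsum_of_injective
            (injective_pow_mul_digit_add hpq (NeZero.ne p) J) fun n : ℤ => f (q / q ^ (J + 1) * n)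

theorem partialSum_uniformDigits_conv_expLaw_le [NeZero p] (hpq : p.Coprime q) (hq : 0 < q) {ℓ : ℝ}
    (hℓ : Real.exp (-ℓ) = p / q) (J : ℕ) {u : ℝ} (hu : -(J * Real.log q) ≤ u) :
    partialSum ℓ (uniformDigits p) J ∗ expLaw u ≤ (2 * Real.exp (J * ℓ)).toNNReal • volume := by
  rw [expLaw_eq_withDensity]
  refine conv_withDensity_le (measurable_exponentialPDF _) fun z => ?_
  have hp : (0 : ℝ) < p := Nat.cast_pos.2 (NeZero.pos p)
  have hq' : (1 : ℝ) ≤ q := Nat.one_le_cast.2 hq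
  have hexpℓ : Real.exp (J * ℓ) = (p : ℝ)⁻¹ ^ J * q ^ J := by
    rw [Real.exp_nat_mul, ← mul_pow, ← inv_inv (Real.exp ℓ), ← Real.exp_neg, hℓ, inv_div,
      div_eq_inv_mul]
  have hr : Real.exp (-u) ≤ q ^ J := by
    rw [← Real.exp_log (zero_lt_one.trans_le hq'), ← Real.exp_nat_mul]
    exact Real.exp_le_exp.2 (by linarith)
  have hh : 1 / ((q : ℝ) / q ^ J) ≤ q ^ J := by
    rw [one_div_div]
    exact div_le_self (by positivity) hq'
  calc ∫⁻ x, ProbabilityTheory.exponentialPDF (Real.exp (-u)) (z - x)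
        ∂partialSum ℓ (uniformDigits p) J
      ≤ (p : ℝ≥0∞)⁻¹ ^ J * ∑' k : ℤ,
          ProbabilityTheory.exponentialPDF (Real.exp (-u)) (z - q / q ^ J * k) :=
        lintegral_partialSum_uniformDigits_le hpq hq hℓ J
          ((measurable_exponentialPDF _).comp (by fun_prop))
    _ ≤ (p : ℝ≥0∞)⁻¹ ^ J * ENNReal.ofReal (Real.exp (-u) + 1 / (q / q ^ J)) := by
        gcongr
        exact tsum_exponentialPDF_sub_mul_le (Real.exp_pos _) (by positivity) z
    _ ≤ (p : ℝ≥0∞)⁻¹ ^ J * ENNReal.ofReal (q ^ J + q ^ J) := by gcongr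
    _ = ENNReal.ofReal (2 * Real.exp (J * ℓ)) := by
        rw [← ENNReal.ofReal_natCast p, ← ENNReal.ofReal_inv_of_pos hp,
          ← ENNReal.ofReal_pow (by positivity), ← ENNReal.ofReal_mul (by positivity), hexpℓ]
        ring_nf

end UniformDigits

theorem isSelfSimilar_uniformDigits {q : ℕ} {ℓ : ℝ}
    (hℓ : Real.exp (-ℓ) = (q - 1) / q) {μ : Measure ℝ} [SFinite μ]
    (hμ : μ = ∑ i : Fin (q - 1),
      (((q : ENNReal) - 1))⁻¹ •
        Measure.map (fun x : ℝ => ((q : ℝ) - 1) / q * x + ((i : ℕ) + 1)) μ) :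
    IsSelfSimilar ℓ (uniformDigits (q - 1)) μ := by
  have hcast : ((q - 1 : ℕ) : ENNReal) = q - 1 := by simp
  refine Measure.ext_of_lintegral _ fun f hf => ?_
  rw [lintegral_uniformDigits_conv_dilate _ ℓ μ hf, hcast, hℓ]
  conv_lhs => rw [hμ]
  rw [lintegral_finsetSum_measure, Finset.mul_sum]
  refine Finset.sum_congr rfl fun i _ => ?_
  rw [lintegral_smul_measure, lintegral_map hf (by fun_prop), smul_eq_mul]
  simp only [add_comm]

section LogDivSubOne

variable {x : ℝ}

theorem log_div_sub_one_pos (hx : 1 < x) : 0 < Real.log (x / (x - 1)) :=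
  Real.log_pos ((one_lt_div (sub_pos.2 hx)).2 (sub_one_lt x))

theorem exp_neg_log_div_sub_one (hx : 1 < x) :
    Real.exp (-Real.log (x / (x - 1))) = (x - 1) / x := by
  rw [← Real.log_inv, inv_div, Real.exp_log (div_pos (sub_pos.2 hx) (zero_lt_one.trans hx))]

theorem log_div_sub_one_mul_le (hx : 1 < x) : Real.log (x / (x - 1)) * (x - 1) ≤ 1 := by
  have hx1 : 0 < x - 1 := sub_pos.2 hx
  calc Real.log (x / (x - 1)) * (x - 1) ≤ (x / (x - 1) - 1) * (x - 1) := by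
        gcongr
        exact Real.log_le_sub_one_of_pos (by positivity)
    _ = 1 := by rw [sub_mul, div_mul_cancel₀ _ hx1.ne', one_mul, sub_sub_cancel]

theorem log_div_sub_one_le_one_div_sixteen (hx : 17 ≤ x) : Real.log (x / (x - 1)) ≤ 1 / 16 := by
  nlinarith [log_div_sub_one_mul_le (by linarith : 1 < x),
    log_div_sub_one_pos (by linarith : 1 < x)]

theorem two_mul_log_div_sub_one_lt (hx : 17 ≤ x) :
    2 * Real.log (x / (x - 1)) < 69 / 32 * (1 - (x - 1) / x) := by
  have hsub : 1 - (x - 1) / x = 1 / x := by field_simp; ring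
  rw [hsub, mul_one_div, lt_div_iff₀ (by linarith)]
  linarith [log_div_sub_one_mul_le (by linarith : 1 < x), log_div_sub_one_le_one_div_sixteen hx]

theorem mul_log_div_sub_one_lt_mul_log (hx : 17 ≤ x) :
    41 * Real.log (x / (x - 1)) < 15 / 16 * Real.log x := by
  have hlog : 4 * Real.log 2 ≤ Real.log x := by
    rw [← Real.log_rpow two_pos]
    exact Real.log_le_log (by norm_num) (by norm_num; linarith)
  linarith [log_div_sub_one_le_one_div_sixteen hx, Real.log_two_gt_d9]

end LogDivSubOne

theorem statement18_general (q : ℕ) (hq17 : 17 ≤ q)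
    (μ : Measure ℝ) (hμ : IsProbabilityMeasure μ)
    (hss : μ = ∑ i : Fin (q - 1),
      (((q : ENNReal) - 1))⁻¹ •
        Measure.map (fun x : ℝ => ((q : ℝ) - 1) / q * x + ((i : ℕ) + 1)) μ) :
    μ ≪ volume := by
  have hq : (17 : ℝ) ≤ q := by exact_mod_cast hq17
  have hq1 : (1 : ℝ) < q := by linarith
  have : NeZero (q - 1) := ⟨by omega⟩
  have hcoprime : (q - 1).Coprime q :=
    (Nat.coprime_self_sub_left (by omega)).2 (Nat.coprime_one_left q)
  have hexp := exp_neg_log_div_sub_one hq1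
  have hexp' : Real.exp (-Real.log (q / (q - 1))) = ((q - 1 : ℕ) : ℝ) / q := by
    rw [hexp, Nat.cast_sub (by omega), Nat.cast_one]
  -- `S` just exceeds `2 * q / (q - 1) ≤ 68 / 32`, and with `θ = (S / n) ^ (n / 2)` the product
  -- `κ * 4 ^ n * θ` is about `0.83`.
  exact (isSelfSimilar_uniformDigits hexp hss).absolutelyContinuous
    (S := 69 / 32) (n := 40) (θ := (69 / 1280) ^ 20) (κ := 16)
    (log_div_sub_one_pos hq1) (firstMoment_uniformDigits_ne_top _) two_pos (Real.log_pos hq1)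
    (fun J v => partialSum_uniformDigits_conv_expLaw_le hcoprime (by omega) hexp' J)
    (hexp ▸ two_mul_log_div_sub_one_lt hq) (by norm_num) (by norm_num) (by norm_num)
    (by norm_num; exact mul_log_div_sub_one_lt_mul_log hq) (by norm_num) (by norm_num)

theorem statement18 (q : ℕ) (hq : q.Prime) (hq17 : 17 ≤ q)
    (μ : Measure ℝ) (hμ : IsProbabilityMeasure μ)
    (hss : μ = ∑ i : Fin (q - 1),
      (((q : ENNReal) - 1))⁻¹ •
        Measure.map (fun x : ℝ => ((q : ℝ) - 1) / q * x + ((i : ℕ) + 1)) μ) :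
    μ ≪ volume :=
  statement18_general q hq17 μ hμ hss
end

section
/- Let p be a prime with p ≡ 3 (mod 4), let I = (p) be the ideal generated by p in the ring of Gaussian integers ℤ[i] (which is a prime ideal), let a ∈ ℤ[i] with a ∉ I, and set α = a/p ∈ ℂ. Let A ⊆ ℤ[i] be a finite set whose elements are pairwise incongruent modulo I. Then: (1) if k ≥ 0 and x_0, …, x_k, y_0, …, y_k ∈ A satisfy ∑_{j=0}^k x_j α^j = ∑_{j=0}^k y_j α^j, then x_j = y_j for all j; (2) for every k ≥ 1, any two distinct complex numbers of the form ∑_{j=0}^{k−1} x_j α^j with all x_j ∈ A have distance at least p^{−(k−1)}. -/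
open GaussianInt

/-!
The difference of the two sums is the value at `α = a / b` (where `b = p`) of a polynomial with
coefficients `x_j - y_j`. If that value is zero, the rational root theorem says that `b` divides the
leading coefficient, a difference of two elements of `A`, so the polynomial is zero. If the value is
nonzero, multiplying it by `b ^ (k - 1)` clears the denominators and yields a nonzero Gaussian
integer, whose absolute value is at least one.
-/

section Polynomial

open Polynomial

-- Unlike `den_dvd_of_is_root`, this allows a field `K` larger than the field of fractions of `R`.
theorem dvd_leadingCoeff_of_eval₂_div_eq_zero {R K : Type*} [CommRing R] [Field K] {f : R →+* K}
    (hf : Function.Injective f) {a b : R} (hb : b ≠ 0) (hab : IsCoprime a b) {P : R[X]}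
    (hP : P.eval₂ f (f a / f b) = 0) : b ∣ P.leadingCoeff := by
  have : IsDomain R := hf.isDomain f
  have scaled_root : (P.scaleRoots b).IsRoot a := by
    have h := scaleRoots_eval₂_eq_zero_of_eval₂_div_eq_zero hf hP
      (mem_nonZeroDivisors_of_ne_zero hb)
    rwa [eval₂_at_apply, map_eq_zero_iff f hf] at h
  have dvd_top_term : b ∣ (P.scaleRoots b).coeff P.natDegree * a ^ P.natDegree := by
    refine dvd_term_of_isRoot_of_dvd_terms _ scaled_root fun j hj => ?_
    rcases hj.lt_or_gt with hlt | hgt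
    · rw [coeff_scaleRoots]
      exact ((dvd_pow_self b (Nat.sub_ne_zero_of_lt hlt)).mul_left _).mul_right _
    · simp [coeff_eq_zero_of_natDegree_lt hgt]
  rw [coeff_scaleRoots_natDegree] at dvd_top_term
  exact hab.symm.pow_right.dvd_of_dvd_mul_right dvd_top_term

theorem one_le_norm_pow_mul_norm_eval₂_div {R K : Type*} [Semiring R] [NormedField K]
    {f : R →+* K} (hf : ∀ z, z ≠ 0 → 1 ≤ ‖f z‖) {a b : R} (hb : b ≠ 0) {P : R[X]} {N : ℕ}
    (hN : P.natDegree ≤ N) (hP : P.eval₂ f (f a / f b) ≠ 0) :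
    1 ≤ ‖f b‖ ^ N * ‖P.eval₂ f (f a / f b)‖ := by
  have hfb : f b ≠ 0 := norm_pos_iff.mp (zero_lt_one.trans_le (hf b hb))
  obtain ⟨D, c, hc, hD⟩ := denomsClearable_of_natDegree_le N a (inv_mul_cancel₀ hfb) P hN
  rw [eq_inv_of_mul_eq_one_left hc, ← div_eq_mul_inv, eval_map] at hD
  have hfD : f D ≠ 0 := hD ▸ mul_ne_zero (pow_ne_zero N hfb) hP
  have hD0 : D ≠ 0 := ne_of_apply_ne f (by rwa [map_zero])
  calc
    1 ≤ ‖f D‖ := hf D hD0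
    _ = ‖f b‖ ^ N * ‖P.eval₂ f (f a / f b)‖ := by rw [hD, norm_mul, norm_pow]

theorem eval₂_ofFn {R S : Type*} [Semiring R] [DecidableEq R] [Semiring S] (f : R →+* S) (s : S)
    {k : ℕ} (x : Fin k → R) : (ofFn k x).eval₂ f s = ∑ j, f (x j) * s ^ (j : ℕ) := by
  simp only [ofFn_eq_sum_monomial, eval₂_finsetSum, eval₂_monomial]

theorem eval₂_ofFn_sub {R S : Type*} [Ring R] [DecidableEq R] [Ring S] (f : R →+* S) (s : S)
    {k : ℕ} (x y : Fin k → R) :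
    (ofFn k (x - y)).eval₂ f s = ∑ j, f (x j) * s ^ (j : ℕ) - ∑ j, f (y j) * s ^ (j : ℕ) := by
  rw [map_sub, eval₂_sub, eval₂_ofFn, eval₂_ofFn]

theorem eq_of_sum_mul_div_pow_eq {R K : Type*} [CommRing R] [Field K] {f : R →+* K}
    (hf : Function.Injective f) {a b : R} (hb : b ≠ 0) (hab : IsCoprime a b) {A : Set R}
    (hA : A.Pairwise fun x y => ¬ b ∣ x - y) {k : ℕ} {x y : Fin k → R}
    (hx : ∀ j, x j ∈ A) (hy : ∀ j, y j ∈ A)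
    (hxy : ∑ j, f (x j) * (f a / f b) ^ (j : ℕ) = ∑ j, f (y j) * (f a / f b) ^ (j : ℕ)) :
    x = y := by
  classical
  have coeff_eq_zero : ∀ n, b ∣ (ofFn k (x - y)).coeff n → (ofFn k (x - y)).coeff n = 0 := by
    intro n hn
    rcases lt_or_ge n k with hlt | hge
    · rw [ofFn_coeff_eq_val_of_lt _ hlt] at hn ⊢
      exact sub_eq_zero.mpr (hA.eq (hx _) (hy _) (not_not_intro hn))
    · exact ofFn_coeff_eq_zero_of_ge _ hge
  have eval_eq_zero : (ofFn k (x - y)).eval₂ f (f a / f b) = 0 := by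
    rw [eval₂_ofFn_sub, hxy, sub_self]
  have ofFn_eq_zero : ofFn k (x - y) = 0 := leadingCoeff_eq_zero.mp <|
    coeff_eq_zero _ (dvd_leadingCoeff_of_eval₂_div_eq_zero hf hb hab eval_eq_zero)
  exact sub_eq_zero.mp ((map_eq_zero_iff _ (injective_ofFn k)).mp ofFn_eq_zero)

theorem inv_norm_pow_le_dist_sum_mul_div_pow {R K : Type*} [Ring R] [NormedField K]
    {f : R →+* K} (hf : ∀ z, z ≠ 0 → 1 ≤ ‖f z‖) {a b : R} (hb : b ≠ 0) {k : ℕ} {x y : Fin k → R}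
    (hxy : ∑ j, f (x j) * (f a / f b) ^ (j : ℕ) ≠ ∑ j, f (y j) * (f a / f b) ^ (j : ℕ)) :
    (‖f b‖ ^ (k - 1))⁻¹ ≤
      dist (∑ j, f (x j) * (f a / f b) ^ (j : ℕ)) (∑ j, f (y j) * (f a / f b) ^ (j : ℕ)) := by
  classical
  have hk : 1 ≤ k := Nat.one_le_iff_ne_zero.mpr (by rintro rfl; simp at hxy)
  have hpos : 0 < ‖f b‖ ^ (k - 1) := pow_pos (zero_lt_one.trans_le (hf b hb)) _
  rw [← sub_ne_zero, ← eval₂_ofFn_sub] at hxy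
  rw [dist_eq_norm, ← eval₂_ofFn_sub, inv_le_iff_one_le_mul₀' hpos]
  exact one_le_norm_pow_mul_norm_eval₂_div hf hb (Nat.le_sub_one_of_lt (ofFn_natDegree_lt hk _)) hxy

end Polynomial

theorem one_le_norm_toComplex (z : GaussianInt) (hz : z ≠ 0) : 1 ≤ ‖toComplex z‖ := by
  rw [← one_le_sq_iff₀ (_root_.norm_nonneg _), ← Complex.normSq_eq_norm_sq, ← intCast_real_norm]
  exact_mod_cast norm_pos.mpr hz

theorem isCoprime_natCast_of_mod_four_eq_three {p : ℕ} (hp : p.Prime) (hp3 : p % 4 = 3)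
    {a : GaussianInt} (ha : ¬ (p : GaussianInt) ∣ a) : IsCoprime a (p : GaussianInt) := by
  have : Fact p.Prime := ⟨hp⟩
  have p_irreducible := (prime_of_nat_prime_of_mod_four_eq_three p hp3).irreducible
  exact (p_irreducible.coprime_iff_not_dvd.mpr ha).symm

theorem statement19_general {R K : Type*} [CommRing R] [NormedField K] {f : R →+* K}
    (hf : ∀ z, z ≠ 0 → 1 ≤ ‖f z‖) {a b : R} (hb : b ≠ 0) (hab : IsCoprime a b)
    {α : K} (hα : α = f a / f b) {A : Set R} (hA : A.Pairwise fun x y => ¬ b ∣ x - y) :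
    (∀ (k : ℕ) (x y : Fin k → R), (∀ j, x j ∈ A) → (∀ j, y j ∈ A) →
      ∑ j, f (x j) * α ^ (j : ℕ) = ∑ j, f (y j) * α ^ (j : ℕ) → x = y) ∧
    (∀ (k : ℕ) (x y : Fin k → R),
      ∑ j, f (x j) * α ^ (j : ℕ) ≠ ∑ j, f (y j) * α ^ (j : ℕ) →
      (‖f b‖ ^ (k - 1))⁻¹ ≤
        dist (∑ j, f (x j) * α ^ (j : ℕ)) (∑ j, f (y j) * α ^ (j : ℕ))) := by
  subst hα
  have f_injective : Function.Injective f := (injective_iff_map_eq_zero f).mpr fun z hz => by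
    by_contra hz0
    exact absurd (hf z hz0) (by simp [hz])
  exact ⟨fun _ _ _ => eq_of_sum_mul_div_pow_eq f_injective hb hab hA,
    fun _ _ _ => inv_norm_pow_le_dist_sum_mul_div_pow hf hb⟩

theorem statement19 (p : ℕ) (hp : p.Prime) (hp3 : p % 4 = 3)
    (a : GaussianInt) (ha : ¬ (p : GaussianInt) ∣ a)
    (α : ℂ) (hα : α = (a : ℂ) / p)
    (A : Finset GaussianInt)
    (hA : ∀ x ∈ A, ∀ y ∈ A, x ≠ y → ¬ (p : GaussianInt) ∣ (x - y)) :
    (∀ (k : ℕ) (x y : Fin (k + 1) → GaussianInt),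
      (∀ j, x j ∈ A) → (∀ j, y j ∈ A) →
      ∑ j, (x j : ℂ) * α ^ (j : ℕ) = ∑ j, (y j : ℂ) * α ^ (j : ℕ) → x = y) ∧
    (∀ k : ℕ, 1 ≤ k → ∀ x y : Fin k → GaussianInt,
      (∀ j, x j ∈ A) → (∀ j, y j ∈ A) →
      (∑ j, (x j : ℂ) * α ^ (j : ℕ)) ≠ (∑ j, (y j : ℂ) * α ^ (j : ℕ)) →
      ((p : ℝ) ^ (k - 1))⁻¹ ≤
        dist (∑ j, (x j : ℂ) * α ^ (j : ℕ)) (∑ j, (y j : ℂ) * α ^ (j : ℕ))) := by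
  obtain ⟨injective, separated⟩ := statement19_general one_le_norm_toComplex
    (Nat.cast_ne_zero.mpr hp.ne_zero) (isCoprime_natCast_of_mod_four_eq_three hp hp3 ha)
    (hα.trans (by rw [map_natCast])) (A := A) fun x hx y hy => hA x hx y hy
  simp only [map_natCast, Complex.norm_natCast] at separated
  exact ⟨fun k => injective (k + 1), fun k _ x y _ _ => separated k x y⟩
end
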